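/- The following conditions are equivalent for a Banach space (Y,‖·‖_Y). (1) Y admits an equivalent uniformly convex norm. (2) There exists q ∈ [2,∞) such that for every n ∈ ℕ there exists C = C(n,Y) ∈ (0,∞) such that for every n-dimensional normed space (X,‖·‖_X) and every 1-Lipschitz compactly supported function f:X→Y one has ∫_X ∫_0^∞ inf_{Λ ∈ A(X,Y)} fint_{x+tB_X} ‖f(y)−Λ(y)‖_Y^q / t^{q+1} dy dt dx ≤ C·|supp(f)|. (3) There exist q,C ∈ [2,∞), n₀ ∈ ℕ and an n₀-dimensional normed space (X₀,‖·‖_{X₀}) such that the inequality in (2) holds for every 1-Lipschitz compactly supported function f:X₀→Y. -/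

import Mathlib

open MeasureTheory Metric Set ENNReal

noncomputable section

/-- `N` is a norm on the real vector space `V`. -/
def IsNorm {V : Type*} [AddCommGroup V] [Module ℝ V] (N : V → ℝ) : Prop :=
  (∀ x, N x = 0 → x = 0) ∧ (∀ (a : ℝ) (x : V), N (a • x) = |a| * N x) ∧
    (∀ x y : V, N (x + y) ≤ N x + N y)

/-- The norm `N` is uniformly convex. -/
def UniformlyConvexNorm {V : Type*} [AddCommGroup V] [Module ℝ V] (N : V → ℝ) : Prop :=
  ∀ ε ∈ Set.Ioc (0 : ℝ) 2, ∃ δ ∈ Set.Ioc (0 : ℝ) 1, ∀ x y : V,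
    N x ≤ 1 → N y ≤ 1 → ε ≤ N (x - y) → N (x + y) ≤ 2 * (1 - δ)

/-- `Y` admits an equivalent uniformly convex norm. -/
def AdmitsEquivUniformlyConvexNorm (Y : Type*) [NormedAddCommGroup Y] [NormedSpace ℝ Y] : Prop :=
  ∃ N : Y → ℝ, IsNorm N ∧
    (∃ a b : ℝ, 0 < a ∧ 0 < b ∧ ∀ y : Y, a * ‖y‖ ≤ N y ∧ N y ≤ b * ‖y‖) ∧
    UniformlyConvexNorm N

/-- The Dorronsoro inequality with exponent `q` and constant `C` for mappings from the
`n`-dimensional normed space `X = (ℝⁿ, N)` to `Y`: every `1`-Lipschitz compactly supported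
`f : X → Y` satisfies
`∫_X ∫_0^∞ inf_{Λ affine} ⨍_{x+tB_X} ‖f-Λ‖^q/t^{q+1} dy dt dx ≤ C·|supp f|`. -/
def DorronsoroIneq (q C : ℝ) {n : ℕ} (N : EuclideanSpace ℝ (Fin n) → ℝ)
    (Y : Type*) [NormedAddCommGroup Y] [NormedSpace ℝ Y] : Prop :=
  ∀ f : EuclideanSpace ℝ (Fin n) → Y,
    HasCompactSupport f → (∀ x y, ‖f x - f y‖ ≤ N (x - y)) →
    (∫⁻ x, ∫⁻ t in Set.Ioi (0 : ℝ),
        (⨅ Λ : EuclideanSpace ℝ (Fin n) →ᵃ[ℝ] Y,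
            (∫⁻ y in {y : EuclideanSpace ℝ (Fin n) | N (y - x) ≤ t},
                (‖f y - Λ y‖₊ : ℝ≥0∞) ^ q)
              / volume {y : EuclideanSpace ℝ (Fin n) | N (y - x) ≤ t})
          / ENNReal.ofReal (t ^ (q + 1)))
      ≤ ENNReal.ofReal C * volume (tsupport f)

/-!
(1) ⇒ (2). Replace the norm by an equivalent uniformly convex one `p`. Localising a martingale in
the unit ball by the supporting functionals of `p ^ 2` bounds its `m`-energy for some `m`, uniformly
in its length. Hence the Bellman function of the energy is finite, and it provides a bounded
Lipschitz potential `G` whose convexity defect controls the `m`-th power of increments. Evaluating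
`G` at the difference quotients of `f` and telescoping along dyadic scales bounds the energy of the
second differences of `f` by the measure of its support. Second differences control mixed
differences, and these control the distance from `f` to the affine map interpolating it at a
translated and dilated Auerbach basis, uniformly over all norms on `ℝⁿ`.

(3) ⇒ (1). A dyadic martingale in the unit ball of `Y` is the sequence of dyadic difference
quotients of a Lipschitz curve. Composing the curve with a linear functional and cutting off gives a
function on `X₀` whose Dorronsoro energy dominates that of the martingale. Martingale energies are
therefore bounded, and the Bellman function yields a uniformly convex renorming.
-/

section Seminorms

variable {V : Type*} [AddCommGroup V] [Module ℝ V]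

lemma IsNorm.exists_seminorm {N : V → ℝ} (hN : IsNorm N) : ∃ p : Seminorm ℝ V, ⇑p = N :=
  ⟨Seminorm.of N hN.2.2 hN.2.1, rfl⟩

lemma isNorm_norm (Y : Type*) [NormedAddCommGroup Y] [NormedSpace ℝ Y] :
    IsNorm (norm : Y → ℝ) :=
  ⟨fun _ h => norm_eq_zero.1 h, fun a x => by rw [norm_smul, Real.norm_eq_abs], norm_add_le⟩

variable (p : Seminorm ℝ V)

lemma seminorm_smul_of_nonneg {a : ℝ} (ha : 0 ≤ a) (x : V) : p (a • x) = a * p x := by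
  rw [map_smul_eq_mul, Real.norm_of_nonneg ha]

lemma two_mul_seminorm_le_add_sub (x v : V) : 2 * p x ≤ p (x + v) + p (x - v) := by
  calc 2 * p x = p ((x + v) + (x - v)) := by
        rw [← seminorm_smul_of_nonneg p zero_le_two]; congr 1; module
    _ ≤ p (x + v) + p (x - v) := map_add_le_add p _ _

lemma two_mul_seminorm_increment_le (x v : V) : 2 * p v ≤ p (x + v) + p (x - v) := by
  rw [add_comm x v, map_sub_rev p x v]
  exact two_mul_seminorm_le_add_sub p v x

lemma exists_linear_eq_le_seminorm (z : V) :
    ∃ l : V →ₗ[ℝ] ℝ, l z = p z ∧ ∀ x, l x ≤ p x := by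
  by_cases hz : z = 0
  · exact ⟨0, by simp [hz], fun x => by simp⟩
  obtain ⟨l, hl, hlp⟩ := exists_extension_of_le_sublinear
    (LinearPMap.mkSpanSingleton (K := ℝ) z (p z) hz) p
    (fun c hc x => seminorm_smul_of_nonneg p hc.le x) (map_add_le_add p) (by
      rintro ⟨x, hx⟩
      obtain ⟨a, rfl⟩ := Submodule.mem_span_singleton.1 hx
      refine (LinearPMap.mkSpanSingleton'_apply z (p z) _ a hx).trans_le ?_
      rw [map_smul_eq_mul, smul_eq_mul, RingHom.id_apply]
      exact mul_le_mul_of_nonneg_right (le_abs_self a) (apply_nonneg p z))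
  refine ⟨l, ?_, hlp⟩
  rw [hl ⟨z, Submodule.mem_span_singleton_self z⟩]
  exact LinearPMap.mkSpanSingleton_apply ℝ ℝ hz (p z)

end Seminorms

/-- `MartingaleEnergy p m k x s`: some dyadic martingale `(Mⱼ)` with values in the unit ball of
`p`, started at `x` and stopped after at most `k` steps, has energy
`𝔼 ∑ⱼ p (Mⱼ₊₁ - Mⱼ) ^ m = s`. -/
inductive MartingaleEnergy {V : Type*} [AddCommGroup V] [Module ℝ V] (p : Seminorm ℝ V) (m : ℕ) :
    ℕ → V → ℝ → Prop
  | const {k : ℕ} {x : V} : p x ≤ 1 → MartingaleEnergy p m k x 0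
  | step {k : ℕ} {x v : V} {s₁ s₂ : ℝ} : MartingaleEnergy p m k (x + v) s₁ →
      MartingaleEnergy p m k (x - v) s₂ →
      MartingaleEnergy p m (k + 1) x ((s₁ + s₂) / 2 + p v ^ m)

namespace MartingaleEnergy

variable {V : Type*} [AddCommGroup V] [Module ℝ V] {p : Seminorm ℝ V} {m k l : ℕ} {x : V} {s : ℝ}

lemma start_le_one (h : MartingaleEnergy p m k x s) : p x ≤ 1 := by
  induction h with
  | const hx => exact hx
  | @step _ x v _ _ _ _ h₁ h₂ => linarith [two_mul_seminorm_le_add_sub p x v]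

lemma nonneg (h : MartingaleEnergy p m k x s) : 0 ≤ s := by
  induction h with
  | const _ => exact le_rfl
  | @step _ _ v _ _ _ _ h₁ h₂ =>
    have := pow_nonneg (apply_nonneg p v) m
    linarith

lemma increment_le_one {v : V} {s₁ s₂ : ℝ} (h₁ : MartingaleEnergy p m k (x + v) s₁)
    (h₂ : MartingaleEnergy p m k (x - v) s₂) : p v ≤ 1 := by
  linarith [two_mul_seminorm_increment_le p x v, h₁.start_le_one, h₂.start_le_one]

lemma le_length (h : MartingaleEnergy p m k x s) : s ≤ k := by
  induction h with
  | const _ => positivity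
  | @step k x v s₁ s₂ h₁ h₂ ih₁ ih₂ =>
    have := pow_le_one₀ (n := m) (apply_nonneg p v) (increment_le_one h₁ h₂)
    push_cast
    linarith

lemma neg (h : MartingaleEnergy p m k x s) : MartingaleEnergy p m k (-x) s := by
  induction h with
  | const hx => exact const (by rwa [map_neg_eq_map])
  | @step k x v s₁ s₂ _ _ ih₁ ih₂ =>
    rw [← map_neg_eq_map p v]
    exact step (by rwa [← neg_add]) (by rwa [← neg_sub'])

lemma succ (h : MartingaleEnergy p m k x s) : MartingaleEnergy p m (k + 1) x s := by
  induction h with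
  | const hx => exact const hx
  | step _ _ ih₁ ih₂ => exact step ih₁ ih₂

lemma mono (hkl : k ≤ l) (h : MartingaleEnergy p m k x s) : MartingaleEnergy p m l x s := by
  induction hkl with
  | refl => exact h
  | step _ ih => exact ih.succ

end MartingaleEnergy

/-- `MartingaleEnergyBound p m C`: the `m`-energy of dyadic martingales in the unit ball of `p` is
at most `C`, uniformly in their length. -/
def MartingaleEnergyBound {V : Type*} [AddCommGroup V] [Module ℝ V] (p : Seminorm ℝ V) (m : ℕ)
    (C : ℝ) : Prop :=
  ∀ ⦃k x s⦄, MartingaleEnergy p m k x s → s ≤ C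

section EnergyOfUniformlyConvex

variable {V : Type*} [AddCommGroup V] [Module ℝ V] {p : Seminorm ℝ V}

lemma sq_midpoint_add_le_of_uniformlyConvex (hp : UniformlyConvexNorm p) :
    ∃ η : ℝ, 0 < η ∧ ∀ x z, p x ≤ 1 → p z ≤ 1 → 1 / 2 ≤ p (x - z) →
      p ((1 / 2 : ℝ) • (x + z)) ^ 2 + η ≤ (p x ^ 2 + p z ^ 2) / 2 := by
  obtain ⟨δ, ⟨hδ, hδ1⟩, hconv⟩ := hp (1 / 2) (by norm_num)
  refine ⟨(δ / 32) ^ 2 / 4, by positivity, fun x z hx hz hxz => ?_⟩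
  rw [seminorm_smul_of_nonneg p (by norm_num)]
  have hx0 := apply_nonneg p x
  have hz0 := apply_nonneg p z
  have hxz0 := apply_nonneg p (x + z)
  have hadd := map_add_le_add p x z
  by_cases hfar : δ / 32 ≤ |p x - p z|
  · have : (δ / 32) ^ 2 ≤ (p x - p z) ^ 2 := by
      rw [← sq_abs (p x - p z)]
      gcongr
    nlinarith
  obtain ⟨hlow, hupp⟩ := abs_lt.1 (not_le.1 hfar)
  obtain ⟨r, hxr, hzr, hr1, hr⟩ :
      ∃ r, p x ≤ r ∧ p z ≤ r ∧ r ≤ 1 ∧ r ^ 2 - δ / 32 ≤ (p x ^ 2 + p z ^ 2) / 2 := by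
    rcases le_total (p x) (p z) with h | h
    · exact ⟨p z, h, le_rfl, hz, by nlinarith⟩
    · exact ⟨p x, le_rfl, h, hx, by nlinarith⟩
  have hr4 : 1 / 4 ≤ r := by linarith [map_sub_le_add p x z]
  have hr0 : 0 < r := by linarith
  have hscaled : p (x + z) ≤ r * (2 * (1 - δ)) := by
    rw [← inv_mul_le_iff₀ hr0, ← seminorm_smul_of_nonneg p (by positivity), smul_add]
    apply hconv
    · rwa [seminorm_smul_of_nonneg p (by positivity), inv_mul_le_iff₀ hr0, mul_one]
    · rwa [seminorm_smul_of_nonneg p (by positivity), inv_mul_le_iff₀ hr0, mul_one]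
    · rw [← smul_sub, seminorm_smul_of_nonneg p (by positivity), le_inv_mul_iff₀ hr0]
      nlinarith
  have hmid : (1 / 2 * p (x + z)) ^ 2 ≤ r ^ 2 - δ / 16 := by
    calc (1 / 2 * p (x + z)) ^ 2 ≤ (r * (1 - δ)) ^ 2 :=
          pow_le_pow_left₀ (by positivity) (by linarith) 2
      _ ≤ r ^ 2 * (1 - δ) := by
        rw [mul_pow]
        gcongr
        nlinarith
      _ ≤ r ^ 2 - δ / 16 := by
        nlinarith [mul_le_mul_of_nonneg_right (show (1 / 16 : ℝ) ≤ r ^ 2 by nlinarith) hδ.le]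
  nlinarith

/-- `l` supports `p ^ 2` at `z`, and `p ^ 2` exceeds its supporting function by at least `η` at the
points of the unit ball whose distance to `z` is at least `1 / 2`. -/
def SupportsSq (p : Seminorm ℝ V) (η : ℝ) (z : V) (l : V →ₗ[ℝ] ℝ) : Prop :=
  (∀ x, p z ^ 2 + l (x - z) ≤ p x ^ 2) ∧
    ∀ x, p x ≤ 1 → 1 / 2 ≤ p (x - z) → p z ^ 2 + l (x - z) + η ≤ p x ^ 2

lemma SupportsSq.gain_of_exit {η : ℝ} {x v z : V} {l : V →ₗ[ℝ] ℝ} (h : SupportsSq p η z l)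
    (hadd : p (x + v) ≤ 1) (hsub : p (x - v) ≤ 1)
    (hexit : ¬(p (x + v - z) ≤ 1 / 2 ∧ p (x - v - z) ≤ 1 / 2)) :
    2 * p z ^ 2 + 2 * l (x - z) + η ≤ p (x + v) ^ 2 + p (x - v) ^ 2 := by
  have hlin : l (x + v - z) + l (x - v - z) = 2 * l (x - z) := by
    simp only [map_sub, map_add]; ring
  rcases not_and_or.1 hexit with hfar | hfar
  · linarith [h.2 _ hadd (not_le.1 hfar).le, h.1 (x - v)]
  · linarith [h.2 _ hsub (not_le.1 hfar).le, h.1 (x + v)]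

lemma exists_supportsSq_of_uniformlyConvex (hp : UniformlyConvexNorm p) :
    ∃ η : ℝ, 0 < η ∧ ∀ z, p z ≤ 1 → ∃ l, SupportsSq p η z l := by
  obtain ⟨η, hη, hgain⟩ := sq_midpoint_add_le_of_uniformlyConvex hp
  refine ⟨2 * η, by positivity, fun z hz => ?_⟩
  obtain ⟨l, hlz, hlp⟩ := exists_linear_eq_le_seminorm p z
  have hsupp : ∀ x, p z ^ 2 + ((2 * p z) • l) (x - z) ≤ p x ^ 2 := by
    intro x
    simp only [LinearMap.smul_apply, map_sub, smul_eq_mul, hlz]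
    nlinarith [sq_nonneg (p x - p z), mul_le_mul_of_nonneg_left (hlp x) (apply_nonneg p z)]
  refine ⟨(2 * p z) • l, hsupp, fun x hx hxz => ?_⟩
  have hmid := hsupp ((1 / 2 : ℝ) • (x + z))
  rw [show (1 / 2 : ℝ) • (x + z) - z = (1 / 2 : ℝ) • (x - z) by module, map_smul,
    smul_eq_mul] at hmid
  linarith [hgain x z hx hz hxz]

variable {m n k : ℕ} {η W : ℝ} {l : V → V →ₗ[ℝ] ℝ}

/-- While the martingale stays within `1 / 2` of `z`, centring it at `z` and doubling it keeps it in
the unit ball and multiplies its energy by `2 ^ m`; when it first leaves this neighbourhood, `p ^ 2`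
has gained `η` over its supporting function at `z`, and the crude bound `W` is affordable. -/
lemma MartingaleEnergy.exists_localized (hη : 0 < η) (hW0 : 0 ≤ W)
    (hW : ∀ x s, MartingaleEnergy p m n x s → s ≤ W)
    (hl : ∀ z, p z ≤ 1 → SupportsSq p η z (l z)) {x : V} {s : ℝ}
    (h : MartingaleEnergy p m k x s) (hk : k ≤ n) {z : V} (hz : p z ≤ 1)
    (hxz : p (x - z) ≤ 1 / 2) :
    ∃ s', MartingaleEnergy p m k ((2 : ℝ) • (x - z)) s' ∧
      s ≤ (1 / 2) ^ m * s' +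
        2 * (1 + (1 / 2) ^ m * W) / η * (1 - p z ^ 2 - l z (x - z)) := by
  set A := 2 * (1 + (1 / 2) ^ m * W) / η
  have hA0 : 0 ≤ A := by positivity
  have hdouble : ∀ {y : V}, p y ≤ 1 / 2 → p ((2 : ℝ) • y) ≤ 1 := fun hy => by
    rw [seminorm_smul_of_nonneg p zero_le_two]; linarith
  induction h generalizing z with
  | @const k x hx =>
    refine ⟨0, const (hdouble hxz), ?_⟩
    have := pow_le_one₀ (n := 2) (apply_nonneg p x) hx
    linarith [mul_nonneg hA0 (show 0 ≤ 1 - p z ^ 2 - l z (x - z) by linarith [(hl z hz).1 x])]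
  | @step k x v s₁ s₂ h₁ h₂ ih₁ ih₂ =>
    by_cases hstay : p (x + v - z) ≤ 1 / 2 ∧ p (x - v - z) ≤ 1 / 2
    · obtain ⟨t₁, ht₁, hs₁⟩ := ih₁ (by omega) hz hstay.1
      obtain ⟨t₂, ht₂, hs₂⟩ := ih₂ (by omega) hz hstay.2
      refine ⟨(t₁ + t₂) / 2 + p ((2 : ℝ) • v) ^ m, step ?_ ?_, ?_⟩
      · rwa [← smul_add, sub_add_eq_add_sub]
      · rwa [← smul_sub, sub_right_comm]
      · have hlin : l z (x + v - z) + l z (x - v - z) = 2 * l z (x - z) := by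
          simp only [map_sub, map_add]; ring
        have hscale : (1 / 2 : ℝ) ^ m * p ((2 : ℝ) • v) ^ m = p v ^ m := by
          rw [← mul_pow, seminorm_smul_of_nonneg p zero_le_two]; congr 1; ring
        rw [mul_add, hscale]
        linear_combination (hs₁ + hs₂) / 2 - A / 2 * hlin
    · refine ⟨0, const (hdouble hxz), ?_⟩
      have restart : ∀ {y t}, MartingaleEnergy p m k y t →
          (∃ t', MartingaleEnergy p m k ((2 : ℝ) • (y - y)) t' ∧
            t ≤ (1 / 2) ^ m * t' + A * (1 - p y ^ 2 - l y (y - y))) →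
          t ≤ (1 / 2) ^ m * W + A * (1 - p y ^ 2) := by
        rintro y t - ⟨t', ht', hle⟩
        have : (1 / 2 : ℝ) ^ m * t' ≤ (1 / 2) ^ m * W := by
          gcongr
          exact hW _ _ (ht'.mono (by omega))
        rw [sub_self, map_zero, sub_zero] at hle
        linarith
      have hs₁ := restart h₁ (ih₁ (by omega) h₁.start_le_one (by simp))
      have hs₂ := restart h₂ (ih₂ (by omega) h₂.start_le_one (by simp))
      have hv : p v ^ m ≤ 1 := pow_le_one₀ (apply_nonneg p v) (increment_le_one h₁ h₂)
      have hgain := (hl z hz).gain_of_exit h₁.start_le_one h₂.start_le_one hstay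
      have hAη : A * η = 2 * (1 + (1 / 2) ^ m * W) := div_mul_cancel₀ _ hη.ne'
      linarith [mul_le_mul_of_nonneg_left hgain hA0]

lemma exists_two_le_pow_half_mul_le {b : ℝ} (hb : 0 < b) :
    ∃ m : ℕ, 2 ≤ m ∧ (1 / 2 : ℝ) ^ m * b ≤ 1 / 2 := by
  obtain ⟨m, hm⟩ := exists_pow_lt_of_lt_one (x := 1 / 2 / b) (y := (1 / 2 : ℝ))
    (by positivity) (by norm_num)
  refine ⟨m + 2, by omega, ((lt_div_iff₀ hb).1 (lt_of_le_of_lt ?_ hm)).le⟩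
  exact pow_le_pow_of_le_one (by norm_num) (by norm_num) (by omega)

theorem exists_martingaleEnergyBound_of_uniformlyConvex (hp : UniformlyConvexNorm p) :
    ∃ m : ℕ, 2 ≤ m ∧ ∃ C : ℝ, MartingaleEnergyBound p m C := by
  obtain ⟨η, hη, hl⟩ := exists_supportsSq_of_uniformlyConvex hp
  choose! l hl using hl
  obtain ⟨m, hm2, hm⟩ := exists_two_le_pow_half_mul_le (show 0 < 1 + 2 / η by positivity)
  have improve : ∀ n W, 0 ≤ W → (∀ x s, MartingaleEnergy p m n x s → s ≤ W) →
      ∀ x s, MartingaleEnergy p m n x s → s ≤ W / 2 + 2 / η := by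
    intro n W hW0 hW x s hs
    obtain ⟨s', hs', hle⟩ := hs.exists_localized hη hW0 hW hl le_rfl hs.start_le_one (by simp)
    rw [sub_self, map_zero, sub_zero] at hle
    calc s ≤ (1 / 2) ^ m * s' + 2 * (1 + (1 / 2) ^ m * W) / η * (1 - p x ^ 2) := hle
      _ ≤ (1 / 2) ^ m * W + 2 * (1 + (1 / 2) ^ m * W) / η * 1 := by
        gcongr
        · exact hW _ _ hs'
        · linarith [sq_nonneg (p x)]
      _ = (1 / 2) ^ m * (1 + 2 / η) * W + 2 / η := by field
      _ ≤ 1 / 2 * W + 2 / η := by gcongr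
      _ = W / 2 + 2 / η := by ring
  refine ⟨m, hm2, 4 / η, fun n x s hs => ?_⟩
  set S : Set ℝ := {s | ∃ x, MartingaleEnergy p m n x s}
  have hS : BddAbove S := ⟨n, fun s ⟨_, h⟩ => h.le_length⟩
  have hsS : s ≤ sSup S := le_csSup hS ⟨x, hs⟩
  have hhalf : sSup S ≤ sSup S / 2 + 2 / η :=
    csSup_le ⟨s, x, hs⟩ fun t ⟨y, ht⟩ =>
      improve n _ (hs.nonneg.trans hsS) (fun x s h => le_csSup hS ⟨x, h⟩) y t ht
  linarith [show 4 / η = 2 * (2 / η) by ring]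

end EnergyOfUniformlyConvex

section MaximalEnergy

variable {V : Type*} [AddCommGroup V] [Module ℝ V]

/-- The Bellman function of the martingale energy: the largest `m`-energy of a dyadic martingale in
the unit ball of `p` started at `x`. -/
def maximalEnergy (p : Seminorm ℝ V) (m : ℕ) (x : V) : ℝ :=
  sSup {s | ∃ k, MartingaleEnergy p m k x s}

variable {p : Seminorm ℝ V} {m : ℕ} {C : ℝ} {x y v : V}

lemma maximalEnergy_neg (x : V) : maximalEnergy p m (-x) = maximalEnergy p m x := by
  unfold maximalEnergy
  congr 1
  ext s
  exact ⟨fun ⟨k, h⟩ => ⟨k, by simpa only [neg_neg] using h.neg⟩, fun ⟨k, h⟩ => ⟨k, h.neg⟩⟩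

namespace MartingaleEnergyBound

variable (hC : MartingaleEnergyBound p m C)
include hC

lemma const_nonneg : 0 ≤ C :=
  hC (k := 0) (MartingaleEnergy.const (x := 0) (by simp))

lemma bddAbove (x : V) : BddAbove {s | ∃ k, MartingaleEnergy p m k x s} :=
  ⟨C, fun _ ⟨_, h⟩ => hC h⟩

lemma maximalEnergy_nonneg (hx : p x ≤ 1) : 0 ≤ maximalEnergy p m x :=
  le_csSup (hC.bddAbove x) ⟨0, .const hx⟩

lemma maximalEnergy_le (hx : p x ≤ 1) : maximalEnergy p m x ≤ C :=
  csSup_le ⟨0, 0, .const hx⟩ fun _ ⟨_, h⟩ => hC h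

lemma average_add_pow_le (h₁ : p (x + v) ≤ 1) (h₂ : p (x - v) ≤ 1) :
    (maximalEnergy p m (x + v) + maximalEnergy p m (x - v)) / 2 + p v ^ m ≤
      maximalEnergy p m x := by
  suffices maximalEnergy p m (x + v) ≤
      2 * (maximalEnergy p m x - p v ^ m) - maximalEnergy p m (x - v) by linarith
  refine csSup_le ⟨0, 0, .const h₁⟩ ?_
  rintro s₁ ⟨k, hs₁⟩
  suffices maximalEnergy p m (x - v) ≤ 2 * (maximalEnergy p m x - p v ^ m) - s₁ by linarith
  refine csSup_le ⟨0, 0, .const h₂⟩ ?_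
  rintro s₂ ⟨l, hs₂⟩
  have : (s₁ + s₂) / 2 + p v ^ m ≤ maximalEnergy p m x :=
    le_csSup (hC.bddAbove x) ⟨max k l + 1,
      .step (hs₁.mono (le_max_left k l)) (hs₂.mono (le_max_right k l))⟩
  linarith

lemma maximalEnergy_le_zero (hx : p x ≤ 1) : maximalEnergy p m x ≤ maximalEnergy p m 0 := by
  have hmid := hC.average_add_pow_le (x := 0) (v := x) (by simpa using hx) (by simpa using hx)
  rw [zero_add, zero_sub, maximalEnergy_neg] at hmid
  linarith [pow_nonneg (apply_nonneg p x) m]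

lemma midpoint_add_pow_le (hx : p x ≤ 1) (hy : p y ≤ 1) :
    (maximalEnergy p m x + maximalEnergy p m y) / 2 + p ((1 / 2 : ℝ) • (x - y)) ^ m ≤
      maximalEnergy p m ((1 / 2 : ℝ) • (x + y)) := by
  have hx' : (1 / 2 : ℝ) • (x + y) + (1 / 2 : ℝ) • (x - y) = x := by module
  have hy' : (1 / 2 : ℝ) • (x + y) - (1 / 2 : ℝ) • (x - y) = y := by module
  simpa only [hx', hy'] using
    hC.average_add_pow_le (x := (1 / 2 : ℝ) • (x + y)) (v := (1 / 2 : ℝ) • (x - y))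
      (by rwa [hx']) (by rwa [hy'])

lemma one_sub_pow_half_mul_le (hx : p x ≤ 1 / 2) (hv : p v ≤ 1 / 2) (k : ℕ) :
    (1 - (1 / 2) ^ k) * maximalEnergy p m x ≤ maximalEnergy p m (x + (1 / 2 : ℝ) ^ k • v) := by
  have hmem : ∀ k : ℕ, p (x + (1 / 2 : ℝ) ^ k • v) ≤ 1 := fun k => by
    have hk : (1 / 2 : ℝ) ^ k ≤ 1 := pow_le_one₀ (by norm_num) (by norm_num)
    have hadd := map_add_le_add p x ((1 / 2 : ℝ) ^ k • v)
    rw [seminorm_smul_of_nonneg p (by positivity)] at hadd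
    nlinarith [apply_nonneg p v]
  induction k with
  | zero => simpa using hC.maximalEnergy_nonneg (hmem 0)
  | succ k ih =>
    have hmid := hC.midpoint_add_pow_le (hmem k) (show p x ≤ 1 by linarith)
    rw [show (1 / 2 : ℝ) • (x + (1 / 2 : ℝ) ^ k • v + x) = x + (1 / 2 : ℝ) ^ (k + 1) • v by
      rw [pow_succ]; module] at hmid
    have := pow_nonneg (apply_nonneg p ((1 / 2 : ℝ) • (x + (1 / 2 : ℝ) ^ k • v - x))) m
    calc (1 - (1 / 2) ^ (k + 1)) * maximalEnergy p m x
        = ((1 - (1 / 2) ^ k) * maximalEnergy p m x + maximalEnergy p m x) / 2 := by ring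
      _ ≤ maximalEnergy p m (x + (1 / 2 : ℝ) ^ (k + 1) • v) := by linarith

/-- Moving from `x` towards `x + v` by a factor `2⁻ᵏ` costs at most `2⁻ᵏ C`; rescaling to the given
pair of points yields a Lipschitz bound. -/
lemma maximalEnergy_sub_le (hx : p x ≤ 1 / 2) (hy : p y ≤ 1 / 2) :
    maximalEnergy p m x - maximalEnergy p m y ≤ 4 * C * p (x - y) := by
  have hC0 := hC.const_nonneg
  have hcoarse : ∀ k : ℕ, p (x - y) ≤ (1 / 2) ^ (k + 1) →
      maximalEnergy p m x - maximalEnergy p m y ≤ (1 / 2) ^ k * C := by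
    intro k hk
    have hlow := hC.one_sub_pow_half_mul_le (v := (2 : ℝ) ^ k • (y - x)) hx (by
      rw [seminorm_smul_of_nonneg p (by positivity), map_sub_rev]
      calc (2 : ℝ) ^ k * p (x - y) ≤ 2 ^ k * (1 / 2) ^ (k + 1) := by gcongr
        _ = 1 / 2 := by rw [pow_succ, ← mul_assoc, ← mul_pow]; norm_num) k
    rw [smul_smul, ← mul_pow, one_div_mul_cancel two_ne_zero, one_pow, one_smul,
      add_sub_cancel] at hlow
    have := mul_le_mul_of_nonneg_left (hC.maximalEnergy_le (show p x ≤ 1 by linarith))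
      (show (0 : ℝ) ≤ (1 / 2) ^ k by positivity)
    linarith
  rcases (apply_nonneg p (x - y)).eq_or_lt with h0 | h0
  · rw [← h0, mul_zero]
    have hlim : Filter.Tendsto (fun k : ℕ => (1 / 2 : ℝ) ^ k * C) Filter.atTop (nhds (0 * C)) :=
      (_root_.tendsto_pow_atTop_nhds_zero_of_lt_one (by norm_num) (by norm_num)).mul_const C
    rw [zero_mul] at hlim
    exact ge_of_tendsto' hlim fun k => hcoarse k (h0 ▸ by positivity)
  rcases le_total (p (x - y)) (1 / 2) with hhalf | hhalf
  · obtain ⟨k, hk, hk'⟩ := exists_nat_pow_near_of_lt_one (x := 2 * p (x - y)) (y := (1 / 2 : ℝ))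
      (by positivity) (by linarith) (by norm_num) (by norm_num)
    calc _ ≤ (1 / 2) ^ k * C := hcoarse k (by rw [pow_succ]; linarith)
      _ ≤ 4 * p (x - y) * C := by gcongr; rw [pow_succ] at hk; linarith
      _ = 4 * C * p (x - y) := by ring
  · nlinarith [hC.maximalEnergy_le (show p x ≤ 1 by linarith),
      hC.maximalEnergy_nonneg (show p y ≤ 1 by linarith)]

lemma abs_maximalEnergy_sub_le (hx : p x ≤ 1 / 2) (hy : p y ≤ 1 / 2) :
    |maximalEnergy p m x - maximalEnergy p m y| ≤ 4 * C * p (x - y) :=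
  abs_sub_le_iff.2 ⟨hC.maximalEnergy_sub_le hx hy,
    map_sub_rev p x y ▸ hC.maximalEnergy_sub_le hy hx⟩

end MartingaleEnergyBound

end MaximalEnergy

section Renorming

lemma ordConnected_of_isClosed_of_midpoint {S : Set ℝ} (hS : IsClosed S)
    (hmid : ∀ a ∈ S, ∀ b ∈ S, midpoint ℝ a b ∈ S) : S.OrdConnected := by
  refine ⟨fun a ha b hb t ⟨hat, htb⟩ => ?_⟩
  have hbdd : BddAbove (S ∩ Iic t) := ⟨t, fun _ h => h.2⟩
  have hbdd' : BddBelow (S ∩ Ici t) := ⟨t, fun _ h => h.2⟩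
  have hc := (hS.inter isClosed_Iic).csSup_mem ⟨a, ha, hat⟩ hbdd
  have hd := (hS.inter isClosed_Ici).csInf_mem ⟨b, hb, htb⟩ hbdd'
  set c := sSup (S ∩ Iic t)
  set d := sInf (S ∩ Ici t)
  have hct : c ≤ t := hc.2
  have htd : t ≤ d := hd.2
  have hgap := hmid c hc.1 d hd.1
  have hval : midpoint ℝ c d = (c + d) / 2 := by
    rw [midpoint_eq_smul_add, smul_eq_mul, invOf_eq_inv, inv_mul_eq_div]
  rcases le_total (midpoint ℝ c d) t with h | h
  · have : t = d := by linarith [le_csSup hbdd ⟨hgap, h⟩]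
    exact this ▸ hd.1
  · have : t = c := by linarith [csInf_le hbdd' ⟨hgap, h⟩]
    exact this ▸ hc.1

lemma convex_of_isClosed_of_midpoint {E : Type*} [AddCommGroup E] [Module ℝ E]
    [TopologicalSpace E] [IsTopologicalAddGroup E] [ContinuousSMul ℝ E] {K : Set E}
    (hK : IsClosed K) (hmid : ∀ x ∈ K, ∀ y ∈ K, midpoint ℝ x y ∈ K) : Convex ℝ K := by
  refine convex_iff_segment_subset.2 fun x hx y hy => ?_
  have hS : (AffineMap.lineMap x y ⁻¹' K : Set ℝ).OrdConnected :=
    ordConnected_of_isClosed_of_midpoint (hK.preimage AffineMap.lineMap_continuous)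
      fun a ha b hb => by
        simpa only [mem_preimage, AffineMap.map_midpoint] using hmid _ ha _ hb
  rw [segment_eq_image_lineMap, image_subset_iff]
  exact hS.out (by simpa using hx) (by simpa using hy)

variable {Y : Type*} [NormedAddCommGroup Y] [NormedSpace ℝ Y]

lemma uniformlyConvexNorm_gauge {K : Set Y} (hconv : Convex ℝ K) (hclosed : IsClosed K)
    (hnhds : K ∈ nhds 0)
    (hround : ∀ ε > 0, ∃ δ : ℝ, 0 < δ ∧ ∀ x ∈ K, ∀ y ∈ K, ε ≤ gauge K (x - y) →
      (1 + δ) • midpoint ℝ x y ∈ K) :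
    UniformlyConvexNorm (gauge K) := by
  rintro ε ⟨hε, -⟩
  obtain ⟨δ, hδ, hround⟩ := hround ε hε
  have hmem : ∀ {x}, gauge K x ≤ 1 → x ∈ K := fun hx =>
    hclosed.closure_eq ▸ (gauge_le_one_iff_mem_closure hconv hnhds).1 hx
  refine ⟨δ / (1 + δ), ⟨by positivity, by rw [div_le_one (by positivity)]; linarith⟩,
    fun x y hx hy hxy => ?_⟩
  have hle := gauge_le_one_of_mem (hround x (hmem hx) y (hmem hy) hxy)
  rw [gauge_smul_of_nonneg (by positivity), smul_eq_mul, ← le_div_iff₀' (by positivity)] at hle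
  rw [← midpoint_add_self ℝ x y, ← two_smul ℝ (midpoint ℝ x y), gauge_smul_of_nonneg zero_le_two,
    smul_eq_mul]
  refine mul_le_mul_of_nonneg_left (hle.trans_eq ?_) zero_le_two
  field_simp
  ring

lemma admitsEquivUniformlyConvexNorm_of_body {K : Set Y} {r R : ℝ} (hr : 0 < r) (hR : 0 < R)
    (hclosed : IsClosed K) (hneg : ∀ x ∈ K, -x ∈ K) (hrK : closedBall 0 r ⊆ K)
    (hKR : K ⊆ closedBall 0 R) (hmid : ∀ x ∈ K, ∀ y ∈ K, midpoint ℝ x y ∈ K)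
    (hround : ∀ ε > 0, ∃ δ : ℝ, 0 < δ ∧ ∀ x ∈ K, ∀ y ∈ K, ε ≤ ‖x - y‖ →
      (1 + δ) • midpoint ℝ x y ∈ K) :
    AdmitsEquivUniformlyConvexNorm Y := by
  have hconv := convex_of_isClosed_of_midpoint hclosed hmid
  have hnhds : K ∈ nhds (0 : Y) := Filter.mem_of_superset (closedBall_mem_nhds 0 hr) hrK
  have habs : Absorbent ℝ K := absorbent_nhds_zero hnhds
  have hlow : ∀ y, R⁻¹ * ‖y‖ ≤ gauge K y := fun y => by
    rw [inv_mul_eq_div]; exact le_gauge_of_subset_closedBall habs hR.le hKR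
  have hupp : ∀ y, gauge K y ≤ r⁻¹ * ‖y‖ := fun y => by
    rw [le_inv_mul_iff₀ hr]; exact mul_gauge_le_norm (ball_subset_closedBall.trans hrK)
  refine ⟨gauge K, ⟨fun x hx => ?_, fun a x => ?_, gauge_add_le hconv habs⟩,
    ⟨R⁻¹, r⁻¹, by positivity, by positivity, fun y => ⟨hlow y, hupp y⟩⟩,
    uniformlyConvexNorm_gauge hconv hclosed hnhds fun ε hε => ?_⟩
  · have := hlow x
    rw [hx, inv_mul_le_iff₀ hR, mul_zero] at this
    exact norm_le_zero_iff.1 this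
  · rw [gauge_smul ((balanced_iff_neg_mem hconv).2 hneg), Real.norm_eq_abs]
  · obtain ⟨δ, hδ, hround⟩ := hround (r * ε) (by positivity)
    refine ⟨δ, hδ, fun x hx y hy hxy => hround x hx y hy ?_⟩
    rw [← le_inv_mul_iff₀ hr]
    exact hxy.trans (hupp _)

/-- The norm of `x` plus a small multiple of the loss of maximal energy between `0` and `x`; for a
bound `C` of the energy the multiple makes the second summand at most `1 / 8`. -/
def renormFunction (Y : Type*) [NormedAddCommGroup Y] [NormedSpace ℝ Y] (m : ℕ) (C : ℝ) (x : Y) :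
    ℝ :=
  ‖x‖ + (maximalEnergy (normSeminorm ℝ Y) m 0 - maximalEnergy (normSeminorm ℝ Y) m x) /
    (8 * (C + 1))

/-- The unit ball of the new norm: the sublevel set of `renormFunction`, cut off to the region where
that function is continuous. -/
def renormBody (Y : Type*) [NormedAddCommGroup Y] [NormedSpace ℝ Y] (m : ℕ) (C : ℝ) : Set Y :=
  {x | x ∈ closedBall 0 (1 / 2) ∧ renormFunction Y m C x ≤ 1 / 4}

namespace MartingaleEnergyBound

variable {m : ℕ} {C : ℝ} {x y : Y} (hC : MartingaleEnergyBound (normSeminorm ℝ Y) m C)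
include hC

lemma norm_le_renormFunction (hx : ‖x‖ ≤ 1) : ‖x‖ ≤ renormFunction Y m C x := by
  have := hC.const_nonneg
  exact le_add_of_nonneg_right
    (div_nonneg (sub_nonneg.2 (hC.maximalEnergy_le_zero hx)) (by positivity))

lemma renormFunction_le (hx : ‖x‖ ≤ 1) : renormFunction Y m C x ≤ ‖x‖ + 1 / 8 := by
  have := hC.const_nonneg
  refine add_le_add_right ?_ _
  rw [div_le_div_iff₀ (by positivity) (by norm_num)]
  linarith [hC.maximalEnergy_nonneg hx, hC.maximalEnergy_le (x := 0) (by simp)]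

lemma renormFunction_sub_le (hx : ‖x‖ ≤ 1 / 2) (hy : ‖y‖ ≤ 1 / 2) :
    renormFunction Y m C x - renormFunction Y m C y ≤ 2 * ‖x - y‖ := by
  have hC0 := hC.const_nonneg
  have hdiff : maximalEnergy (normSeminorm ℝ Y) m y - maximalEnergy (normSeminorm ℝ Y) m x ≤
      4 * C * ‖x - y‖ := norm_sub_rev x y ▸ hC.maximalEnergy_sub_le hy hx
  calc renormFunction Y m C x - renormFunction Y m C y
      = (‖x‖ - ‖y‖) + (maximalEnergy (normSeminorm ℝ Y) m y -
          maximalEnergy (normSeminorm ℝ Y) m x) / (8 * (C + 1)) := by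
        unfold renormFunction; ring
    _ ≤ ‖x - y‖ + ‖x - y‖ := by
        gcongr
        · exact norm_sub_norm_le x y
        · rw [div_le_iff₀ (by positivity)]
          nlinarith [norm_nonneg (x - y), mul_nonneg hC0 (norm_nonneg (x - y))]
    _ = 2 * ‖x - y‖ := by ring

lemma renormFunction_midpoint_add_le (hx : ‖x‖ ≤ 1) (hy : ‖y‖ ≤ 1) :
    renormFunction Y m C (midpoint ℝ x y) + ‖(1 / 2 : ℝ) • (x - y)‖ ^ m / (8 * (C + 1)) ≤
      (renormFunction Y m C x + renormFunction Y m C y) / 2 := by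
  have := hC.const_nonneg
  have hmid : _ ≤ maximalEnergy (normSeminorm ℝ Y) m ((1 / 2 : ℝ) • (x + y)) :=
    hC.midpoint_add_pow_le hx hy
  have hnorm : ‖(1 / 2 : ℝ) • (x + y)‖ ≤ (‖x‖ + ‖y‖) / 2 := by
    rw [norm_smul, Real.norm_of_nonneg (by norm_num)]
    linarith [norm_add_le x y]
  rw [coe_normSeminorm, ← sub_nonneg] at hmid
  have := div_nonneg hmid (show 0 ≤ 8 * (C + 1) by positivity)
  rw [midpoint_eq_smul_add, invOf_eq_inv, ← one_div]
  simp only [renormFunction]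
  linear_combination hnorm + this

lemma norm_le_of_mem_renormBody (hx : x ∈ renormBody Y m C) : ‖x‖ ≤ 1 / 4 :=
  (hC.norm_le_renormFunction (by linarith [mem_closedBall_zero_iff.1 hx.1])).trans hx.2

lemma isClosed_renormBody : IsClosed (renormBody Y m C) := by
  have hcont : ContinuousOn (renormFunction Y m C) (closedBall 0 (1 / 2)) := by
    refine (LipschitzOnWith.of_le_add_mul 2 fun x hx y hy => ?_).continuousOn
    rw [dist_eq_norm, NNReal.coe_ofNat]
    linarith [hC.renormFunction_sub_le (mem_closedBall_zero_iff.1 hx)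
      (mem_closedBall_zero_iff.1 hy)]
  exact hcont.preimage_isClosed_of_isClosed isClosed_closedBall isClosed_Iic

lemma exists_smul_midpoint_mem_renormBody {ε : ℝ} (hε : 0 < ε) :
    ∃ δ : ℝ, 0 < δ ∧ ∀ x ∈ renormBody Y m C, ∀ y ∈ renormBody Y m C, ε ≤ ‖x - y‖ →
      (1 + δ) • midpoint ℝ x y ∈ renormBody Y m C := by
  have := hC.const_nonneg
  set gain := (ε / 2) ^ m / (8 * (C + 1))
  refine ⟨min gain 1, lt_min (by positivity) one_pos, fun x hx y hy hxy => ?_⟩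
  set δ := min gain 1
  set z := midpoint ℝ x y
  have hδ : 0 ≤ δ := le_min (by positivity) zero_le_one
  have hx4 := hC.norm_le_of_mem_renormBody hx
  have hy4 := hC.norm_le_of_mem_renormBody hy
  have hz4 : ‖z‖ ≤ 1 / 4 := by
    have := convex_closedBall (0 : Y) (1 / 4) |>.midpoint_mem (x := x) (y := y)
      (by simpa using hx4) (by simpa using hy4)
    simpa using this
  have hdilate : ‖(1 + δ) • z‖ ≤ 1 / 2 := by
    rw [norm_smul, Real.norm_of_nonneg (by positivity)]
    nlinarith [min_le_right gain 1, norm_nonneg z]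
  refine ⟨mem_closedBall_zero_iff.2 hdilate, ?_⟩
  have hgain : renormFunction Y m C z + gain ≤ 1 / 4 := by
    have hpow : gain ≤ ‖(1 / 2 : ℝ) • (x - y)‖ ^ m / (8 * (C + 1)) := by
      have : ε / 2 ≤ ‖(1 / 2 : ℝ) • (x - y)‖ := by
        rw [norm_smul, Real.norm_of_nonneg (by norm_num)]; linarith
      change (ε / 2) ^ m / (8 * (C + 1)) ≤ _
      gcongr
    linarith [hC.renormFunction_midpoint_add_le (show ‖x‖ ≤ 1 by linarith)
      (show ‖y‖ ≤ 1 by linarith), hx.2, hy.2]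
  have hlip := hC.renormFunction_sub_le hdilate (show ‖z‖ ≤ 1 / 2 by linarith)
  rw [show (1 + δ) • z - z = δ • z by module, norm_smul, Real.norm_of_nonneg hδ] at hlip
  nlinarith [min_le_left gain 1]

end MartingaleEnergyBound

lemma neg_mem_renormBody {m : ℕ} {C : ℝ} {x : Y} (hx : x ∈ renormBody Y m C) :
    -x ∈ renormBody Y m C := by
  simpa only [renormBody, renormFunction, mem_ofPred_eq, mem_closedBall_zero_iff, norm_neg,
    maximalEnergy_neg] using hx

theorem MartingaleEnergyBound.admitsEquivUniformlyConvexNorm {m : ℕ} {C : ℝ}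
    (hC : MartingaleEnergyBound (normSeminorm ℝ Y) m C) : AdmitsEquivUniformlyConvexNorm Y := by
  refine admitsEquivUniformlyConvexNorm_of_body (r := 1 / 8) (R := 1 / 4) (by norm_num)
    (by norm_num) hC.isClosed_renormBody (fun x => neg_mem_renormBody) (fun x hx => ?_)
    (fun x hx => mem_closedBall_zero_iff.2 (hC.norm_le_of_mem_renormBody hx))
    (fun x hx y hy => ?_) (fun ε hε => hC.exists_smul_midpoint_mem_renormBody hε)
  · rw [mem_closedBall_zero_iff] at hx
    exact ⟨mem_closedBall_zero_iff.2 (by linarith),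
      by linarith [hC.renormFunction_le (show ‖x‖ ≤ 1 by linarith)]⟩
  · have := hC.const_nonneg
    have hball := convex_closedBall (0 : Y) (1 / 2) |>.midpoint_mem hx.1 hy.1
    have hmid := hC.renormFunction_midpoint_add_le
      (show ‖x‖ ≤ 1 by linarith [hC.norm_le_of_mem_renormBody hx])
      (show ‖y‖ ≤ 1 by linarith [hC.norm_le_of_mem_renormBody hy])
    have hgain : 0 ≤ ‖(1 / 2 : ℝ) • (x - y)‖ ^ m / (8 * (C + 1)) := by positivity
    exact ⟨hball, by linarith [hx.2, hy.2]⟩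

end Renorming

/-- The second difference of `u` at `y` with step `v`. -/
def secondDiff {E Y : Type*} [AddCommGroup E] [AddCommGroup Y] [Module ℝ Y] (u : E → Y)
    (y v : E) : Y :=
  u (y + v + v) + u y - (2 : ℝ) • u (y + v)

section SecondDiff

variable {E Y : Type*} [AddCommGroup E] [NormedAddCommGroup Y] [NormedSpace ℝ Y]

lemma secondDiff_sub (u w : E → Y) (y v : E) :
    secondDiff (fun z => u z - w z) y v = secondDiff u y v - secondDiff w y v := by
  simp only [secondDiff]; module

lemma norm_secondDiff_le (u : E → Y) (y v : E) :
    ‖secondDiff u y v‖ ≤ ‖u (y + v + v)‖ + ‖u y‖ + 2 * ‖u (y + v)‖ := by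
  refine (norm_sub_le _ _).trans (add_le_add (norm_add_le _ _) ?_)
  rw [norm_smul, Real.norm_of_nonneg zero_le_two]

lemma secondDiff_affineMap [Module ℝ E] (Λ : E →ᵃ[ℝ] Y) (y v : E) : secondDiff Λ y v = 0 := by
  have map_add_right : ∀ z, Λ (z + v) = Λ.linear v + Λ z := fun z => by
    simpa [add_comm] using Λ.map_vadd z v
  rw [secondDiff, map_add_right, map_add_right]
  module

lemma norm_secondDiff_half_le_of_lipschitz {g : ℝ → Y} (hg : ∀ s t, ‖g s - g t‖ ≤ |s - t|)
    (a : ℝ) {h : ℝ} (hh : 0 ≤ h) : ‖secondDiff g a (h / 2)‖ ≤ h := by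
  have split : secondDiff g a (h / 2)
      = (g (a + h / 2 + h / 2) - g (a + h / 2)) - (g (a + h / 2) - g a) := by
    simp only [secondDiff]; module
  have right := hg (a + h / 2 + h / 2) (a + h / 2)
  have left := hg (a + h / 2) a
  rw [add_sub_cancel_left, abs_of_nonneg (div_nonneg hh zero_le_two)] at left right
  rw [split]
  linarith [norm_sub_le (g (a + h / 2 + h / 2) - g (a + h / 2)) (g (a + h / 2) - g a)]

lemma norm_secondDiff_sub_le_of_lipschitz {g : ℝ → Y} (hg : ∀ s t, ‖g s - g t‖ ≤ |s - t|)
    (a b h : ℝ) : ‖secondDiff g a h - secondDiff g b h‖ ≤ 4 * |a - b| := by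
  have shift : secondDiff g a h - secondDiff g b h
      = secondDiff (fun c => g (a + c) - g (b + c)) 0 h := by
    rw [secondDiff_sub]; simp only [secondDiff, zero_add, add_zero, add_assoc]
  have increment_le : ∀ c, ‖g (a + c) - g (b + c)‖ ≤ |a - b| := fun c =>
    (hg _ _).trans_eq (by rw [add_sub_add_right_eq_sub])
  rw [shift]
  refine (norm_secondDiff_le _ _ _).trans ?_
  linarith [increment_le (0 + h + h), increment_le 0, increment_le (0 + h)]

end SecondDiff

section Concatenation

variable {Y : Type*} [NormedAddCommGroup Y]

/-- The function equal to `g₁` on `(-∞, c]` and to `g₂` on `[c, ∞)`, for `g₁ c = g₂ c`; this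
closed form makes the Lipschitz estimate immediate. -/
def concatenation (g₁ g₂ : ℝ → Y) (c t : ℝ) : Y := g₁ (min t c) + (g₂ (max t c) - g₁ c)

lemma concatenation_of_le {g₁ g₂ : ℝ → Y} {c t : ℝ} (hc : g₁ c = g₂ c) (ht : t ≤ c) :
    concatenation g₁ g₂ c t = g₁ t := by
  rw [concatenation, min_eq_left ht, max_eq_right ht, hc, sub_self, add_zero]

lemma concatenation_of_ge {g₁ g₂ : ℝ → Y} {c t : ℝ} (ht : c ≤ t) :
    concatenation g₁ g₂ c t = g₂ t := by
  rw [concatenation, min_eq_right ht, max_eq_left ht, add_sub_cancel]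

lemma norm_concatenation_sub_le {g₁ g₂ : ℝ → Y} (h₁ : ∀ s t, ‖g₁ s - g₁ t‖ ≤ |s - t|)
    (h₂ : ∀ s t, ‖g₂ s - g₂ t‖ ≤ |s - t|) (c s t : ℝ) :
    ‖concatenation g₁ g₂ c s - concatenation g₁ g₂ c t‖ ≤ |s - t| := by
  have split : concatenation g₁ g₂ c s - concatenation g₁ g₂ c t
      = (g₁ (min s c) - g₁ (min t c)) + (g₂ (max s c) - g₂ (max t c)) := by
    simp only [concatenation]; abel
  have abs_add_abs : |min s c - min t c| + |max s c - max t c| = |s - t| := by grind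
  rw [split, ← abs_add_abs]
  exact (norm_add_le _ _).trans (add_le_add (h₁ _ _) (h₂ _ _))

end Concatenation

/-- The `m`-energy of the second differences of `g` over the dyadic subintervals of `[a, a + h]`
of generation less than `k`; it is the energy of the dyadic martingale of difference quotients
of `g`. -/
def dyadicEnergy {Y : Type*} [NormedAddCommGroup Y] [NormedSpace ℝ Y] (g : ℝ → Y) (m : ℕ) :
    ℕ → ℝ → ℝ → ℝ
  | 0, _, _ => 0
  | k + 1, a, h => (dyadicEnergy g m k a (h / 2) + dyadicEnergy g m k (a + h / 2) (h / 2)) / 2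
      + (‖secondDiff g a (h / 2)‖ / h) ^ m

section DyadicEnergy

variable {Y : Type*} [NormedAddCommGroup Y] [NormedSpace ℝ Y]

lemma dyadicEnergy_nonneg (g : ℝ → Y) (m k : ℕ) (a : ℝ) {h : ℝ} (hh : 0 ≤ h) :
    0 ≤ dyadicEnergy g m k a h := by
  induction k generalizing a h with
  | zero => exact le_rfl
  | succ k ih =>
    have left := ih a (div_nonneg hh zero_le_two)
    have right := ih (a + h / 2) (div_nonneg hh zero_le_two)
    rw [dyadicEnergy]
    positivity

lemma dyadicEnergy_congr {g g' : ℝ → Y} (m k : ℕ) {a h : ℝ} (hh : 0 ≤ h)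
    (hgg' : EqOn g g' (Icc a (a + h))) : dyadicEnergy g m k a h = dyadicEnergy g' m k a h := by
  induction k generalizing a h with
  | zero => rfl
  | succ k ih =>
    have hh2 : 0 ≤ h / 2 := by positivity
    have left := ih hh2 (hgg'.mono (Icc_subset_Icc_right (by linarith)))
    have right := ih (a := a + h / 2) hh2
      (hgg'.mono (Icc_subset_Icc (by linarith) (by linarith)))
    have diff : secondDiff g a (h / 2) = secondDiff g' a (h / 2) := by
      rw [secondDiff, secondDiff, hgg' ⟨by linarith, by linarith⟩, hgg' ⟨by linarith, by linarith⟩,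
        hgg' ⟨by linarith, by linarith⟩]
    rw [dyadicEnergy, dyadicEnergy, left, right, diff]

lemma MartingaleEnergy.exists_lipschitz {m k : ℕ} {x : Y} {s : ℝ}
    (H : MartingaleEnergy (normSeminorm ℝ Y) m k x s) (a : ℝ) {h : ℝ} (hh : 0 < h) (y₀ : Y) :
    ∃ g : ℝ → Y, (∀ s t, ‖g s - g t‖ ≤ |s - t|) ∧ g a = y₀ ∧ g (a + h) = y₀ + h • x ∧
      s ≤ dyadicEnergy g m k a h := by
  induction H generalizing a h y₀ with
  | @const k x hx =>
    refine ⟨fun t => y₀ + (t - a) • x, fun s t => ?_, by simp, by simp,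
      dyadicEnergy_nonneg _ m k a hh.le⟩
    have linear : y₀ + (s - a) • x - (y₀ + (t - a) • x) = (s - t) • x := by module
    rw [linear, norm_smul, Real.norm_eq_abs]
    exact mul_le_of_le_one_right (abs_nonneg _) hx
  | @step k x v s₁ s₂ _ _ ih₁ ih₂ =>
    obtain ⟨g₁, lip₁, start₁, end₁, energy₁⟩ := ih₁ a (half_pos hh) y₀
    obtain ⟨g₂, lip₂, start₂, end₂, energy₂⟩ :=
      ih₂ (a + h / 2) (half_pos hh) (y₀ + (h / 2) • (x + v))
    have join : g₁ (a + h / 2) = g₂ (a + h / 2) := end₁.trans start₂.symm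
    set g := concatenation g₁ g₂ (a + h / 2)
    have left : ∀ t ≤ a + h / 2, g t = g₁ t := fun t => concatenation_of_le join
    have right : ∀ t, a + h / 2 ≤ t → g t = g₂ t := fun t => concatenation_of_ge
    have start_eq : g a = y₀ := by rw [left a (by linarith), start₁]
    have middle_eq : g (a + h / 2) = y₀ + (h / 2) • (x + v) := by rw [left _ le_rfl, end₁]
    have end_eq : g (a + h / 2 + h / 2) = y₀ + h • x := by
      rw [right _ (by linarith), end₂]; module
    refine ⟨g, norm_concatenation_sub_le lip₁ lip₂ _, start_eq,
      by rw [← end_eq, add_assoc, add_halves], ?_⟩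
    have increment : ‖secondDiff g a (h / 2)‖ / h = ‖v‖ := by
      have : secondDiff g a (h / 2) = (-h) • v := by
        rw [secondDiff, end_eq, start_eq, middle_eq]; module
      rw [this, norm_smul, norm_neg, Real.norm_of_nonneg hh.le, mul_div_cancel_left₀ _ hh.ne']
    rw [dyadicEnergy, increment, coe_normSeminorm]
    rw [dyadicEnergy_congr m k (g' := g₁) (half_pos hh).le fun t ht => left t ht.2,
      dyadicEnergy_congr m k (g' := g₂) (half_pos hh).le fun t ht => right t ht.1]
    gcongr

lemma MartingaleEnergy.exists_lipschitz_bounded {m k : ℕ} {x : Y} {s : ℝ}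
    (H : MartingaleEnergy (normSeminorm ℝ Y) m k x s) :
    ∃ g : ℝ → Y, (∀ s t, ‖g s - g t‖ ≤ |s - t|) ∧ (∀ t, ‖g t‖ ≤ 1) ∧
      s ≤ dyadicEnergy g m k 0 1 := by
  obtain ⟨g, lip, start_eq, -, energy⟩ := H.exists_lipschitz 0 one_pos 0
  refine ⟨fun t => g (max 0 (min t 1)), fun s t => (lip _ _).trans ?_, fun t => ?_,
    energy.trans_eq (dyadicEnergy_congr m k zero_le_one fun t ht => ?_)⟩
  · grind
  · have := lip (max 0 (min t 1)) 0
    rw [start_eq, sub_zero, sub_zero, abs_of_nonneg (le_max_left _ _)] at this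
    exact this.trans (max_le zero_le_one (min_le_right _ _))
  · rw [zero_add] at ht
    rw [min_eq_left ht.2, max_eq_right ht.1]

end DyadicEnergy

section FiniteDimensionalSeminorm

variable {E : Type*} [NormedAddCommGroup E] [NormedSpace ℝ E] [FiniteDimensional ℝ E]
  (p : Seminorm ℝ E)

lemma continuous_seminorm_of_finiteDimensional : Continuous p :=
  continuousOn_univ.1 (p.convexOn.continuousOn isOpen_univ)

lemma exists_seminorm_le_norm : ∃ c : ℝ, 0 < c ∧ ∀ x, p x ≤ c * ‖x‖ :=
  p.bound_of_continuous_normedSpace (continuous_seminorm_of_finiteDimensional p)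

lemma continuous_of_seminorm_lipschitz {Y : Type*} [NormedAddCommGroup Y] {f : E → Y}
    (hf : ∀ x y, ‖f x - f y‖ ≤ p (x - y)) : Continuous f := by
  obtain ⟨c, hc, hpc⟩ := exists_seminorm_le_norm p
  refine (LipschitzWith.of_dist_le_mul (K := ⟨c, hc.le⟩) fun x y => ?_).continuous
  rw [dist_eq_norm, dist_eq_norm]
  exact (hf x y).trans (hpc _)

lemma isClosed_seminorm_closedBall (x : E) (r : ℝ) : IsClosed (p.closedBall x r) :=
  isClosed_le ((continuous_seminorm_of_finiteDimensional p).comp (continuous_sub_right x))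
    continuous_const

variable {p}

lemma exists_norm_le_seminorm (hp : ∀ x, p x = 0 → x = 0) :
    ∃ c : ℝ, 0 < c ∧ ∀ x, c * ‖x‖ ≤ p x := by
  rcases subsingleton_or_nontrivial E with hE | hE
  · exact ⟨1, one_pos, fun x => by simp [Subsingleton.elim x 0]⟩
  obtain ⟨z, hz, hmin⟩ := (isCompact_sphere (0 : E) 1).exists_isMinOn
    (NormedSpace.sphere_nonempty.2 zero_le_one)
    (continuous_seminorm_of_finiteDimensional p).continuousOn
  have z_ne : z ≠ 0 := ne_zero_of_mem_unit_sphere ⟨z, hz⟩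
  refine ⟨p z, (apply_nonneg p z).lt_of_ne' fun h => z_ne (hp z h), fun x => ?_⟩
  rcases eq_or_ne x 0 with rfl | hx
  · simp
  have normalized : p z ≤ p (‖x‖⁻¹ • x) := hmin (by simp [norm_smul, hx])
  rwa [seminorm_smul_of_nonneg p (by positivity), le_inv_mul_iff₀ (norm_pos_iff.2 hx), mul_comm]
    at normalized

lemma isCompact_seminorm_closedBall (hp : ∀ x, p x = 0 → x = 0) (x : E) (r : ℝ) :
    IsCompact (p.closedBall x r) := by
  obtain ⟨c, hc, hcp⟩ := exists_norm_le_seminorm hp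
  refine (isCompact_closedBall x (r / c)).of_isClosed_subset (isClosed_seminorm_closedBall p x r)
    fun y hy => ?_
  rw [mem_closedBall, dist_eq_norm, le_div_iff₀' hc]
  exact (hcp _).trans (p.mem_closedBall.1 hy)

variable [MeasurableSpace E] (μ : Measure E) [μ.IsAddHaarMeasure]

variable (p) in
lemma measure_seminorm_closedBall_pos (x : E) {r : ℝ} (hr : 0 < r) : 0 < μ (p.closedBall x r) := by
  refine Measure.measure_pos_of_nonempty_interior μ ⟨x, ?_⟩
  refine interior_mono (p.ball_subset_closedBall x r) ?_
  have isOpen_ball : IsOpen (p.ball x r) :=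
    isOpen_lt ((continuous_seminorm_of_finiteDimensional p).comp (continuous_sub_right x))
      continuous_const
  rw [isOpen_ball.interior_eq]
  exact p.mem_ball_self hr

variable [BorelSpace E]

open scoped Pointwise in
variable (p) in
lemma measure_seminorm_closedBall (x : E) {r : ℝ} (hr : 0 < r) :
    μ (p.closedBall x r) = ENNReal.ofReal (r ^ Module.finrank ℝ E) * μ (p.closedBall 0 1) := by
  have scaled : p.closedBall x r = x +ᵥ r • p.closedBall 0 1 := by
    rw [p.smul_closedBall_zero (norm_pos_iff.2 hr.ne'), p.vadd_closedBall, vadd_eq_add, add_zero,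
      mul_one, Real.norm_of_nonneg hr.le]
  rw [scaled, measure_vadd, Measure.addHaar_smul, abs_of_nonneg (by positivity)]

end FiniteDimensionalSeminorm

section TreeLowerBound

variable {α : Type*} [MeasurableSpace α] {μ : Measure α} {Ω : Set α} {ℓ : α → ℝ}

lemma restrict_inter_preimage_Ico_halves (hΩ : MeasurableSet Ω) (hℓ : Measurable ℓ) (a : ℝ)
    {h : ℝ} (hh : 0 ≤ h) :
    μ.restrict (Ω ∩ ℓ ⁻¹' Ico a (a + h)) = μ.restrict (Ω ∩ ℓ ⁻¹' Ico a (a + h / 2))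
      + μ.restrict (Ω ∩ ℓ ⁻¹' Ico (a + h / 2) (a + h / 2 + h / 2)) := by
  rw [← Measure.restrict_union, ← inter_union_distrib_left, ← preimage_union,
    Ico_union_Ico_eq_Ico (by linarith) (by linarith), add_assoc, add_halves]
  · exact Disjoint.mono inter_subset_right inter_subset_right
      (Disjoint.preimage ℓ Ico_disjoint_Ico_same)
  · exact hΩ.inter (hℓ measurableSet_Ico)

lemma lintegral_Ioc_add_const_mul_le {φ : ℝ → ℝ≥0∞} {r : ℝ} (hr : 0 ≤ r) {K : ℝ≥0∞}
    (hK : ∀ t ∈ Ioc r (2 * r), K ≤ φ t) :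
    (∫⁻ t in Ioc 0 r, φ t) + K * ENNReal.ofReal r ≤ ∫⁻ t in Ioc 0 (2 * r), φ t := by
  have const_le : K * ENNReal.ofReal r ≤ ∫⁻ t in Ioc r (2 * r), φ t := by
    calc K * ENNReal.ofReal r = ∫⁻ _ in Ioc r (2 * r), K := by
          rw [setLIntegral_const, Real.volume_Ioc]; congr 2; ring
      _ ≤ ∫⁻ t in Ioc r (2 * r), φ t := setLIntegral_mono' measurableSet_Ioc hK
  rw [← Ioc_union_Ioc_eq_Ioc hr (by linarith : r ≤ 2 * r),
    lintegral_union measurableSet_Ioc (Ioc_disjoint_Ioc_of_le le_rfl)]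
  gcongr

lemma ofReal_average_add_mul {e₁ e₂ d : ℝ} (he₁ : 0 ≤ e₁) (he₂ : 0 ≤ e₂) (hd : 0 ≤ d)
    (w : ℝ≥0∞) :
    ENNReal.ofReal ((e₁ + e₂) / 2 + d) * (w + w) =
      ENNReal.ofReal e₁ * w + ENNReal.ofReal e₂ * w + ENNReal.ofReal d * (w + w) := by
  have two_halves : ∀ e : ℝ, 0 ≤ e →
      ENNReal.ofReal (e / 2) * (w + w) = ENNReal.ofReal e * w := fun e he => by
    rw [mul_add, ← add_mul, ← ENNReal.ofReal_add (by positivity) (by positivity), add_halves]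
  rw [add_div, ENNReal.ofReal_add (by positivity) hd, add_mul,
    ENNReal.ofReal_add (by positivity) (by positivity), add_mul, two_halves e₁ he₁,
    two_halves e₂ he₂]

variable {Y : Type*} [NormedAddCommGroup Y] [NormedSpace ℝ Y]

lemma dyadicEnergy_le_lintegral (hΩ : MeasurableSet Ω) (hℓ : Measurable ℓ)
    (hμ : ∀ a b h : ℝ, μ (Ω ∩ ℓ ⁻¹' Ico a (a + h)) = μ (Ω ∩ ℓ ⁻¹' Ico b (b + h)))
    {g : ℝ → Y} {m : ℕ} {c R : ℝ} (hc : 0 ≤ c) (hR : 0 ≤ R) {Φ : α → ℝ → ℝ≥0∞}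
    (k : ℕ) {a h : ℝ} (hh : 0 < h)
    (hΦ : ∀ b l, a ≤ b → 0 < l → b + l ≤ a + h → ∀ x ∈ Ω ∩ ℓ ⁻¹' Ico b (b + l),
      ∀ t ∈ Ioc (R * l) (2 * (R * l)),
        ENNReal.ofReal (c * (‖secondDiff g b (l / 2)‖ / l) ^ m / l) ≤ Φ x t) :
    ENNReal.ofReal (c * R * dyadicEnergy g m k a h) * μ (Ω ∩ ℓ ⁻¹' Ico a (a + h)) ≤
      ∫⁻ x in Ω ∩ ℓ ⁻¹' Ico a (a + h), (∫⁻ t in Ioc 0 (2 * (R * h)), Φ x t) ∂μ := by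
  induction k generalizing a h with
  | zero => simp [dyadicEnergy]
  | succ k ih =>
    have left := ih (a := a) (half_pos hh) fun b l hb hl hbl => hΦ b l hb hl (by linarith)
    have right := ih (a := a + h / 2) (half_pos hh) fun b l hb hl hbl =>
      hΦ b l (by linarith) hl (by linarith)
    have left_nonneg := dyadicEnergy_nonneg g m k a (half_pos hh).le
    have right_nonneg := dyadicEnergy_nonneg g m k (a + h / 2) (half_pos hh).le
    have double_radius : 2 * (R * (h / 2)) = R * h := by ring
    rw [double_radius] at left right
    set S := Ω ∩ ℓ ⁻¹' Ico a (a + h)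
    set S₁ := Ω ∩ ℓ ⁻¹' Ico a (a + h / 2)
    set S₂ := Ω ∩ ℓ ⁻¹' Ico (a + h / 2) (a + h / 2 + h / 2)
    set E₁ := dyadicEnergy g m k a (h / 2)
    set E₂ := dyadicEnergy g m k (a + h / 2) (h / 2)
    set D := ‖secondDiff g a (h / 2)‖ / h
    have restrict_S : μ.restrict S = μ.restrict S₁ + μ.restrict S₂ :=
      restrict_inter_preimage_Ico_halves hΩ hℓ a hh.le
    have measure_S₂ : μ S₂ = μ S₁ := hμ _ _ _
    have measure_S : μ S = μ S₁ + μ S₁ := by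
      simpa [measure_S₂] using congrArg (fun ν : Measure α => ν univ) restrict_S
    have energy_split : c * R * dyadicEnergy g m (k + 1) a h
        = (c * R * E₁ + c * R * E₂) / 2 + c * D ^ m / h * (R * h) := by
      change c * R * ((E₁ + E₂) / 2 + D ^ m) = _
      field_simp
    calc ENNReal.ofReal (c * R * dyadicEnergy g m (k + 1) a h) * μ S
        = ENNReal.ofReal (c * R * E₁) * μ S₁ + ENNReal.ofReal (c * R * E₂) * μ S₂
          + ENNReal.ofReal (c * D ^ m / h) * ENNReal.ofReal (R * h) * μ S := by
          rw [energy_split, measure_S, measure_S₂, ofReal_average_add_mul (by positivity)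
            (by positivity) (by positivity),
            ENNReal.ofReal_mul (p := c * D ^ m / h) (by positivity)]
      _ ≤ (∫⁻ x in S, (∫⁻ t in Ioc 0 (R * h), Φ x t) ∂μ)
          + ∫⁻ _ in S, ENNReal.ofReal (c * D ^ m / h) * ENNReal.ofReal (R * h) ∂μ := by
          rw [setLIntegral_const, restrict_S, lintegral_add_measure]
          gcongr
      _ ≤ ∫⁻ x in S, ((∫⁻ t in Ioc 0 (R * h), Φ x t)
            + ENNReal.ofReal (c * D ^ m / h) * ENNReal.ofReal (R * h)) ∂μ := le_lintegral_add _ _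
      _ ≤ ∫⁻ x in S, (∫⁻ t in Ioc 0 (2 * (R * h)), Φ x t) ∂μ := by
          refine setLIntegral_mono' (hΩ.inter (hℓ measurableSet_Ico)) fun x hx => ?_
          exact lintegral_Ioc_add_const_mul_le (by positivity) (hΦ a h le_rfl hh le_rfl x hx)

end TreeLowerBound

section AffineDeviation

variable {E : Type*} [NormedAddCommGroup E] [NormedSpace ℝ E] [MeasurableSpace E]
  {Y : Type*} [NormedAddCommGroup Y] [NormedSpace ℝ Y]

/-- The local distance to affine functions `inf_Λ ⨍_{x + tB} ‖f - Λ‖^q`, where `B` is the closed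
unit ball of `p`. -/
def affineDeviation (q : ℝ) (p : Seminorm ℝ E) (μ : Measure E) (f : E → Y) (x : E) (t : ℝ) :
    ℝ≥0∞ :=
  ⨅ Λ : E →ᵃ[ℝ] Y, (∫⁻ y in p.closedBall x t, ‖f y - Λ y‖ₑ ^ q ∂μ) / μ (p.closedBall x t)

/-- The left-hand side of Dorronsoro's inequality. -/
def dorronsoroEnergy (q : ℝ) (p : Seminorm ℝ E) (μ : Measure E) (f : E → Y) : ℝ≥0∞ :=
  ∫⁻ x, (∫⁻ t in Ioi (0 : ℝ), affineDeviation q p μ f x t / ENNReal.ofReal (t ^ (q + 1))) ∂μ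

lemma dorronsoroIneq_iff {n : ℕ} {q C : ℝ} {p : Seminorm ℝ (EuclideanSpace ℝ (Fin n))} :
    DorronsoroIneq q C p Y ↔ ∀ f : EuclideanSpace ℝ (Fin n) → Y, HasCompactSupport f →
      (∀ x y, ‖f x - f y‖ ≤ p (x - y)) →
        dorronsoroEnergy q p volume f ≤ ENNReal.ofReal C * volume (tsupport f) :=
  Iff.rfl

end AffineDeviation

section SecondDifferenceLowerBound

lemma quarter_le_of_le_norm_secondDiff {G Y : Type*} [AddCommGroup G] [NormedAddCommGroup Y]
    [NormedSpace ℝ Y] {u : G → Y} {y v : G} {A : ℝ} (hA : A ≤ ‖secondDiff u y v‖) :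
    A / 4 ≤ ‖u y‖ ∨ A / 4 ≤ ‖u (y + v)‖ ∨ A / 4 ≤ ‖u (y + v + v)‖ := by
  by_contra! small
  linarith [norm_secondDiff_le u y v, small.1, small.2.1, small.2.2]

variable {G : Type*} [AddCommGroup G] [MeasurableSpace G] [MeasurableAdd G] {μ : Measure G}
  [μ.IsAddRightInvariant]

lemma setLIntegral_comp_add_right_le {S B : Set G} {w : G} (hw : ∀ y ∈ S, y + w ∈ B)
    (φ : G → ℝ≥0∞) : ∫⁻ y in S, φ (y + w) ∂μ ≤ ∫⁻ y in B, φ y ∂μ := by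
  rw [← (measurePreserving_add_right μ w).setLIntegral_comp_preimage_emb
    (measurableEmbedding_addRight w) φ B]
  exact lintegral_mono_set hw

lemma ofReal_rpow_mul_measure_le_lintegral_of_le_norm_secondDiff {Y : Type*}
    [NormedAddCommGroup Y] [NormedSpace ℝ Y] {q : ℝ} (hq : 0 ≤ q) {u : G → Y}
    (hu : Measurable fun y => ‖u y‖ₑ) {S B : Set G} (hS : MeasurableSet S) {v : G}
    (h₀ : S ⊆ B) (h₁ : ∀ y ∈ S, y + v ∈ B) (h₂ : ∀ y ∈ S, y + v + v ∈ B)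
    {A : ℝ} (hA : ∀ y ∈ S, A ≤ ‖secondDiff u y v‖) :
    ENNReal.ofReal (A / 4) ^ q * μ S ≤ 3 * ∫⁻ y in B, ‖u y‖ₑ ^ q ∂μ := by
  set φ : G → ℝ≥0∞ := fun y => ‖u y‖ₑ ^ q
  have measurable_φ : Measurable φ := hu.pow_const q
  have le_of_le_norm : ∀ z : Y, A / 4 ≤ ‖z‖ → ENNReal.ofReal (A / 4) ^ q ≤ ‖z‖ₑ ^ q :=
    fun z hz => by
      rw [← ofReal_norm]
      exact ENNReal.rpow_le_rpow (ENNReal.ofReal_le_ofReal hz) hq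
  calc ENNReal.ofReal (A / 4) ^ q * μ S
      = ∫⁻ _ in S, ENNReal.ofReal (A / 4) ^ q ∂μ := (setLIntegral_const _ _).symm
    _ ≤ ∫⁻ y in S, (φ y + φ (y + v) + φ (y + (v + v))) ∂μ := by
        refine setLIntegral_mono' hS fun y hy => ?_
        rw [← add_assoc y v v]
        rcases quarter_le_of_le_norm_secondDiff (hA y hy) with h | h | h
        · exact (le_of_le_norm _ h).trans (le_add_right (le_add_right le_rfl))
        · exact (le_of_le_norm _ h).trans (le_add_right (le_add_left le_rfl))
        · exact (le_of_le_norm _ h).trans (le_add_left le_rfl)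
    _ = (∫⁻ y in S, φ y ∂μ) + (∫⁻ y in S, φ (y + v) ∂μ) + ∫⁻ y in S, φ (y + (v + v)) ∂μ := by
        have measurable_add_translate : Measurable fun y => φ y + φ (y + v) :=
          measurable_φ.add (measurable_φ.comp (measurable_add_const v))
        rw [lintegral_add_left measurable_add_translate, lintegral_add_left measurable_φ]
    _ ≤ (∫⁻ y in B, φ y ∂μ) + (∫⁻ y in B, φ y ∂μ) + ∫⁻ y in B, φ y ∂μ := by
        refine add_le_add_three (lintegral_mono_set h₀) (setLIntegral_comp_add_right_le h₁ φ)
          (setLIntegral_comp_add_right_le (fun y hy => ?_) φ)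
        rw [← add_assoc]
        exact h₂ y hy
    _ = 3 * ∫⁻ y in B, φ y ∂μ := by ring

end SecondDifferenceLowerBound

lemma three_mul_energy_density_le {q : ℝ} (hq : 0 ≤ q) {m n : ℕ} (hm : q + n ≤ m) {D h t : ℝ}
    (hD : 0 ≤ D) (hD₁ : D ≤ 1) (hh : 0 < h) (ht : 0 ≤ t) (hth : t ≤ 6 * h) :
    3 * (1 / (18 * 96 ^ m) * D ^ m / h * t ^ (q + 1) * t ^ n)
      ≤ (D * h / 16) ^ q * (D * h / 8) ^ n := by
  have power_split : (D / 96) ^ m ≤ (D / 96) ^ q * (D / 48) ^ n := by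
    calc (D / 96) ^ m ≤ (D / 96) ^ (q + n) := by
          rw [← Real.rpow_natCast]
          exact Real.rpow_le_rpow_of_exponent_ge' (by positivity) (by linarith)
            (by positivity) hm
      _ = (D / 96) ^ q * (D / 96) ^ n := by
          rw [Real.rpow_add_of_nonneg (by positivity) hq (by positivity), Real.rpow_natCast]
      _ ≤ (D / 96) ^ q * (D / 48) ^ n := by gcongr; norm_num
  have radius_power : t ^ (q + 1) ≤ (6 * h) ^ q * (6 * h) := by
    rw [← Real.rpow_add_one (by positivity)]
    exact Real.rpow_le_rpow ht hth (by linarith)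
  calc 3 * (1 / (18 * 96 ^ m) * D ^ m / h * t ^ (q + 1) * t ^ n)
      ≤ 3 * (1 / (18 * 96 ^ m) * D ^ m / h * ((6 * h) ^ q * (6 * h)) * (6 * h) ^ n) := by gcongr
    _ = (D / 96) ^ m * ((6 * h) ^ q * (6 * h) ^ n) := by
        rw [div_pow D]; field_simp; ring
    _ ≤ (D / 96) ^ q * (D / 48) ^ n * ((6 * h) ^ q * (6 * h) ^ n) := by gcongr
    _ = (D / 96 * (6 * h)) ^ q * (D / 48 * (6 * h)) ^ n := by
        rw [Real.mul_rpow (x := D / 96) (by positivity) (by positivity), mul_pow (D / 48)]; ring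
    _ = (D * h / 16) ^ q * (D * h / 8) ^ n := by congr 2 <;> ring

section RidgeFunction

variable {E : Type*} [AddCommGroup E] [Module ℝ E] {p : Seminorm ℝ E}

lemma exists_dual_pair [Nontrivial E] (hp : ∀ x, p x = 0 → x = 0) :
    ∃ (ℓ : E →ₗ[ℝ] ℝ) (e : E), ℓ e = 1 ∧ p e = 1 ∧ ∀ x, |ℓ x| ≤ p x := by
  obtain ⟨z, hz⟩ := exists_ne (0 : E)
  obtain ⟨ℓ, hℓz, hℓ⟩ := exists_linear_eq_le_seminorm p z
  have pz_pos : 0 < p z := (apply_nonneg p z).lt_of_ne' fun h => hz (hp z h)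
  refine ⟨ℓ, (p z)⁻¹ • z, ?_, ?_, fun x => abs_le.2 ⟨?_, hℓ x⟩⟩
  · rw [map_smul, hℓz, smul_eq_mul, inv_mul_cancel₀ pz_pos.ne']
  · rw [seminorm_smul_of_nonneg p (inv_nonneg.2 pz_pos.le), inv_mul_cancel₀ pz_pos.ne']
  · have := hℓ (-x)
    rw [map_neg, map_neg_eq_map] at this
    linarith

variable {ℓ : E →ₗ[ℝ] ℝ} {e : E}

/-- The cylinder of `p`-radius `1` about the line `ℝ e`, where `ℓ e = 1`. -/
def solidCylinder (p : Seminorm ℝ E) (ℓ : E →ₗ[ℝ] ℝ) (e : E) : Set E := {x | p (x - ℓ x • e) ≤ 1}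

lemma seminorm_le_two_of_mem_solidCylinder (he : p e ≤ 1) {x : E}
    (hx : x ∈ solidCylinder p ℓ e ∩ ℓ ⁻¹' Ico 0 1) : p x ≤ 2 := by
  obtain ⟨radius_le, height_nonneg, height_lt⟩ := hx
  have triangle := map_add_le_add p (x - ℓ x • e) (ℓ x • e)
  rw [sub_add_cancel, seminorm_smul_of_nonneg p height_nonneg] at triangle
  have axial_le : ℓ x * p e ≤ 1 := mul_le_one₀ height_lt.le (apply_nonneg p e) he
  have radius_le' : p (x - ℓ x • e) ≤ 1 := radius_le
  linarith

lemma closedBall_half_smul_subset_solidCylinder (hℓ : ∀ x, |ℓ x| ≤ p x) (hℓe : ℓ e = 1)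
    (he : p e ≤ 1) :
    p.closedBall ((1 / 2 : ℝ) • e) (1 / 4) ⊆ solidCylinder p ℓ e ∩ ℓ ⁻¹' Ico 0 1 := by
  intro x hx
  rw [p.mem_closedBall] at hx
  have height_near : |ℓ x - 1 / 2| ≤ 1 / 4 := by
    simpa [map_sub, hℓe] using (hℓ (x - (1 / 2 : ℝ) • e)).trans hx
  have radial_eq : x - ℓ x • e = (x - (1 / 2 : ℝ) • e) - (ℓ x - 1 / 2) • e := by module
  have axial_le : p ((ℓ x - 1 / 2) • e) ≤ 1 / 4 := by
    rw [map_smul_eq_mul, Real.norm_eq_abs]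
    exact (mul_le_of_le_one_right (abs_nonneg _) he).trans height_near
  refine ⟨?_, ?_⟩
  · change p (x - ℓ x • e) ≤ 1
    rw [radial_eq]
    linarith [map_sub_le_add p (x - (1 / 2 : ℝ) • e) ((ℓ x - 1 / 2) • e)]
  · obtain ⟨lower, upper⟩ := abs_le.1 height_near
    exact ⟨by linarith, by linarith⟩

lemma measure_solidCylinder_inter_preimage_Ico [MeasurableSpace E] [MeasurableAdd E] (μ : Measure E)
    [μ.IsAddRightInvariant] (hℓe : ℓ e = 1) (a b h : ℝ) :
    μ (solidCylinder p ℓ e ∩ ℓ ⁻¹' Ico a (a + h)) =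
      μ (solidCylinder p ℓ e ∩ ℓ ⁻¹' Ico b (b + h)) := by
  rw [← measure_preimage_add_right μ ((b - a) • e) (solidCylinder p ℓ e ∩ ℓ ⁻¹' Ico b (b + h))]
  congr 1
  ext x
  have height_shift : ℓ (x + (b - a) • e) = ℓ x + (b - a) := by simp [hℓe]
  have radial_shift : x + (b - a) • e - (ℓ x + (b - a)) • e = x - ℓ x • e := by module
  simp only [solidCylinder, mem_inter_iff, mem_preimage, mem_ofPred_eq, height_shift, radial_shift,
    mem_Ico]
  refine and_congr_right' (and_congr ?_ ?_) <;> constructor <;> intro H <;> linarith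

variable {Y : Type*} [NormedAddCommGroup Y] [NormedSpace ℝ Y]

/-- The ridge function `x ↦ g (ℓ x) / 2`, cut off between the `p`-balls of radii `ρ` and `ρ + 1`.
The factor `1 / 2` compensates for the slope of the cut-off. -/
def truncatedRidge (p : Seminorm ℝ E) (ℓ : E →ₗ[ℝ] ℝ) (g : ℝ → Y) (ρ : ℝ) (x : E) : Y :=
  (max 0 (min 1 (ρ + 1 - p x)) / 2) • g (ℓ x)

variable {g : ℝ → Y}

lemma truncatedRidge_of_le {ρ : ℝ} {x : E} (hx : p x ≤ ρ) :
    truncatedRidge p ℓ g ρ x = (1 / 2 : ℝ) • g (ℓ x) := by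
  rw [truncatedRidge, min_eq_left (by linarith), max_eq_right zero_le_one]

lemma truncatedRidge_of_ge {ρ : ℝ} {x : E} (hx : ρ + 1 ≤ p x) :
    truncatedRidge p ℓ g ρ x = 0 := by
  rw [truncatedRidge, max_eq_left ((min_le_right _ _).trans (by linarith)), zero_div, zero_smul]

lemma norm_truncatedRidge_sub_le (hg : ∀ s t, ‖g s - g t‖ ≤ |s - t|) (hg₁ : ∀ t, ‖g t‖ ≤ 1)
    (hℓ : ∀ x, |ℓ x| ≤ p x) (ρ : ℝ) (x y : E) :
    ‖truncatedRidge p ℓ g ρ x - truncatedRidge p ℓ g ρ y‖ ≤ p (x - y) := by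
  rw [truncatedRidge, truncatedRidge]
  have cutoff_lipschitz :
      |max 0 (min 1 (ρ + 1 - p x)) - max 0 (min 1 (ρ + 1 - p y))| ≤ p (x - y) := by
    refine (abs_max_sub_max_le_max _ _ _ _).trans (max_le (by simp) ?_)
    refine (abs_min_sub_min_le_max _ _ _ _).trans (max_le (by simp) ?_)
    calc |ρ + 1 - p x - (ρ + 1 - p y)| = |p y - p x| := by congr 1; ring
      _ ≤ p (x - y) := map_sub_rev p x y ▸ abs_sub_map_le_sub p y x
  have ridge_lipschitz : ‖g (ℓ x) - g (ℓ y)‖ ≤ p (x - y) :=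
    (hg _ _).trans (by rw [← map_sub]; exact hℓ _)
  set u := max 0 (min 1 (ρ + 1 - p x))
  set v := max 0 (min 1 (ρ + 1 - p y))
  have v_nonneg : 0 ≤ v := le_max_left _ _
  have v_le_one : v ≤ 1 := max_le zero_le_one (min_le_left _ _)
  calc ‖(u / 2) • g (ℓ x) - (v / 2) • g (ℓ y)‖
      = ‖((u - v) / 2) • g (ℓ x) + (v / 2) • (g (ℓ x) - g (ℓ y))‖ := by congr 1; module
    _ ≤ |u - v| / 2 * ‖g (ℓ x)‖ + v / 2 * ‖g (ℓ x) - g (ℓ y)‖ := by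
        refine (norm_add_le _ _).trans_eq ?_
        rw [norm_smul, norm_smul, Real.norm_eq_abs, abs_div, abs_two,
          Real.norm_of_nonneg (div_nonneg v_nonneg zero_le_two)]
    _ ≤ p (x - y) / 2 * 1 + 1 / 2 * p (x - y) := by
        gcongr
        exact hg₁ _
    _ = p (x - y) := by ring

lemma norm_secondDiff_sub_le_two_mul (hg : ∀ s t, ‖g s - g t‖ ≤ |s - t|) {f : E → Y}
    {y v : E} (hf₀ : f y = (1 / 2 : ℝ) • g (ℓ y)) (hf₁ : f (y + v) = (1 / 2 : ℝ) • g (ℓ (y + v)))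
    (hf₂ : f (y + v + v) = (1 / 2 : ℝ) • g (ℓ (y + v + v))) (Λ : E →ᵃ[ℝ] Y) (a : ℝ) :
    ‖secondDiff g a (ℓ v)‖ - 4 * |a - ℓ y| ≤ 2 * ‖secondDiff (fun z => f z - Λ z) y v‖ := by
  have reduction : secondDiff (fun z => f z - Λ z) y v
      = (1 / 2 : ℝ) • secondDiff g (ℓ y) (ℓ v) := by
    rw [secondDiff_sub, secondDiff_affineMap, sub_zero]
    simp only [secondDiff, hf₀, hf₁, hf₂, map_add]
    module
  rw [reduction, norm_smul, Real.norm_of_nonneg (by positivity)]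
  linarith [norm_sub_norm_le (secondDiff g a (ℓ v)) (secondDiff g (ℓ y) (ℓ v)),
    norm_secondDiff_sub_le_of_lipschitz hg a (ℓ y) (ℓ v)]

end RidgeFunction

section RidgeLowerBound

lemma add_smul_mem_closedBall {E : Type*} [AddCommGroup E] [Module ℝ E] {p : Seminorm ℝ E}
    {e : E} (he : p e ≤ 1) {x y : E} {c h s : ℝ} (hc : |c| ≤ h) (hs : |s| ≤ h)
    (hy : y ∈ p.closedBall (x + c • e) h) : y + s • e ∈ p.closedBall x (3 * h) := by
  have smul_le : ∀ b : ℝ, |b| ≤ h → p (b • e) ≤ h := fun b hb => by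
    rw [map_smul_eq_mul, Real.norm_eq_abs]
    exact (mul_le_of_le_one_right (abs_nonneg _) he).trans hb
  have decomposition : y + s • e - x = (y - (x + c • e)) + (c • e + s • e) := by abel
  rw [p.mem_closedBall, decomposition]
  linarith [map_add_le_add p (y - (x + c • e)) (c • e + s • e),
    map_add_le_add p (c • e) (s • e), smul_le c hc, smul_le s hs, p.mem_closedBall.1 hy]

variable {E : Type*} [NormedAddCommGroup E] [NormedSpace ℝ E] [FiniteDimensional ℝ E]
  {p : Seminorm ℝ E} {ℓ : E →ₗ[ℝ] ℝ} {e : E}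
  [MeasurableSpace E] [BorelSpace E] (μ : Measure E) [μ.IsAddHaarMeasure]
  {Y : Type*} [NormedAddCommGroup Y] [NormedSpace ℝ Y]
  {q : ℝ} {g : ℝ → Y} {f : E → Y} {x : E} {a h t : ℝ}

lemma ridge_measure_le_lintegral (hℓ : ∀ x, |ℓ x| ≤ p x) (hℓe : ℓ e = 1) (he : p e ≤ 1)
    (hq : 0 ≤ q) (hg : ∀ s t, ‖g s - g t‖ ≤ |s - t|) (hf : Continuous f) (hh : 0 < h)
    (hax : a ≤ ℓ x) (hxa : ℓ x ≤ a + h) (ht : 3 * h ≤ t)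
    (hfg : ∀ y ∈ p.closedBall x t, f y = (1 / 2 : ℝ) • g (ℓ y)) (Λ : E →ᵃ[ℝ] Y) :
    ENNReal.ofReal (‖secondDiff g a (h / 2)‖ / 16) ^ q
        * μ (p.closedBall (x + (a - ℓ x) • e) (‖secondDiff g a (h / 2)‖ / 8))
      ≤ 3 * ∫⁻ y in p.closedBall x t, ‖f y - Λ y‖ₑ ^ q ∂μ := by
  set d := ‖secondDiff g a (h / 2)‖
  have d_le : d ≤ h := norm_secondDiff_half_le_of_lipschitz hg a hh.le
  set c := x + (a - ℓ x) • e with hc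
  have mem_ball : ∀ s, |s| ≤ h → ∀ y ∈ p.closedBall c (d / 8), y + s • e ∈ p.closedBall x t :=
    fun s hs y hy => p.closedBall_mono ht (add_smul_mem_closedBall he
      (abs_le.2 ⟨by linarith, by linarith⟩) hs
      (p.closedBall_mono (by linarith [norm_nonneg (secondDiff g a (h / 2))]) hy))
  have mem₀ : ∀ y ∈ p.closedBall c (d / 8), y ∈ p.closedBall x t := fun y hy => by
    simpa using mem_ball 0 (by simpa using hh.le) y hy
  have mem₁ : ∀ y ∈ p.closedBall c (d / 8), y + (h / 2) • e ∈ p.closedBall x t :=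
    mem_ball (h / 2) (abs_le.2 ⟨by linarith, by linarith⟩)
  have mem₂ : ∀ y ∈ p.closedBall c (d / 8), y + (h / 2) • e + (h / 2) • e ∈ p.closedBall x t :=
    fun y hy => by
      simpa only [add_assoc, ← add_smul, add_halves] using mem_ball h (abs_of_pos hh).le y hy
  have residual_large : ∀ y ∈ p.closedBall c (d / 8),
      d / 4 ≤ ‖secondDiff (fun z => f z - Λ z) y ((h / 2) • e)‖ := fun y hy => by
    have height_near : |a - ℓ y| ≤ d / 8 := by
      have height_centre : ℓ c = a := by simp [hc, hℓe]
      rw [← height_centre, abs_sub_comm, ← map_sub]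
      exact (hℓ _).trans hy
    have lower := norm_secondDiff_sub_le_two_mul hg (hfg y (mem₀ y hy)) (hfg _ (mem₁ y hy))
      (hfg _ (mem₂ y hy)) Λ a
    rw [map_smul, hℓe, smul_eq_mul, mul_one] at lower
    linarith
  have continuous_residual : Continuous fun y => f y - Λ y :=
    hf.sub Λ.continuous_of_finiteDimensional
  have := ofReal_rpow_mul_measure_le_lintegral_of_le_norm_secondDiff (μ := μ) hq
    continuous_residual.enorm.measurable (isClosed_seminorm_closedBall p c _).measurableSet
    mem₀ mem₁ mem₂ residual_large
  rwa [div_div, show (4 * 4 : ℝ) = 16 by norm_num] at this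

lemma ofReal_le_affineDeviation_div (hp : ∀ x, p x = 0 → x = 0) (hℓ : ∀ x, |ℓ x| ≤ p x)
    (hℓe : ℓ e = 1) (he : p e ≤ 1) (hq : 0 < q) {m : ℕ} (hm : q + Module.finrank ℝ E ≤ m)
    (hg : ∀ s t, ‖g s - g t‖ ≤ |s - t|) (hf : Continuous f) (hh : 0 < h)
    (hax : a ≤ ℓ x) (hxa : ℓ x ≤ a + h) (ht : 3 * h ≤ t) (ht' : t ≤ 6 * h)
    (hfg : ∀ y ∈ p.closedBall x t, f y = (1 / 2 : ℝ) • g (ℓ y)) :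
    ENNReal.ofReal (1 / (18 * 96 ^ m) * (‖secondDiff g a (h / 2)‖ / h) ^ m / h)
      ≤ affineDeviation q p μ f x t / ENNReal.ofReal (t ^ (q + 1)) := by
  have t_pos : 0 < t := by linarith
  set d := ‖secondDiff g a (h / 2)‖
  rcases (norm_nonneg (secondDiff g a (h / 2))).eq_or_lt with d_zero | d_pos
  · have m_ne_zero : m ≠ 0 := by
      rintro rfl
      have : (0 : ℝ) ≤ Module.finrank ℝ E := Nat.cast_nonneg _
      push_cast at hm
      linarith
    simp [d, ← d_zero, m_ne_zero]
  have d_le : d ≤ h := norm_secondDiff_half_le_of_lipschitz hg a hh.le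
  rw [ENNReal.le_div_iff_mul_le (.inl (ENNReal.ofReal_pos.2 (by positivity)).ne')
    (.inl ENNReal.ofReal_ne_top), ← ENNReal.ofReal_mul (by positivity)]
  refine le_iInf fun Λ => ?_
  rw [ENNReal.le_div_iff_mul_le (.inl (measure_seminorm_closedBall_pos p μ x t_pos).ne')
    (.inl (isCompact_seminorm_closedBall hp x t).measure_lt_top.ne)]
  refine (ENNReal.mul_le_mul_iff_right three_ne_zero ofNat_ne_top).1 (le_trans ?_
    (ridge_measure_le_lintegral μ hℓ hℓe he hq.le hg hf hh hax hxa ht hfg Λ))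
  have density_le := three_mul_energy_density_le hq.le hm (D := d / h) (by positivity)
    ((div_le_one hh).2 d_le) hh t_pos.le ht'
  rw [div_mul_cancel₀ _ hh.ne'] at density_le
  rw [measure_seminorm_closedBall p μ _ t_pos,
    measure_seminorm_closedBall p μ _ (by positivity : 0 < d / 8), ← mul_assoc, ← mul_assoc,
    ← mul_assoc, ENNReal.ofReal_rpow_of_nonneg (by positivity) hq.le,
    ← ENNReal.ofReal_mul (by positivity), ← ENNReal.ofReal_ofNat 3,
    ← ENNReal.ofReal_mul (by positivity), ← ENNReal.ofReal_mul (by positivity)]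
  refine mul_le_mul_left (ENNReal.ofReal_le_ofReal (le_of_eq_of_le ?_ density_le)) _
  ring

end RidgeLowerBound

section DorronsoroEnergyLowerBound

variable {E : Type*} [NormedAddCommGroup E] [NormedSpace ℝ E] [FiniteDimensional ℝ E]
  {p : Seminorm ℝ E}
  [MeasurableSpace E] [BorelSpace E] (μ : Measure E) [μ.IsAddHaarMeasure]
  {Y : Type*} [NormedAddCommGroup Y] [NormedSpace ℝ Y] {q : ℝ} {m : ℕ}

lemma dyadicEnergy_le_dorronsoroEnergy (hp : ∀ x, p x = 0 → x = 0) {ℓ : E →ₗ[ℝ] ℝ} {e : E}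
    (hℓ : ∀ x, |ℓ x| ≤ p x) (hℓe : ℓ e = 1) (he : p e ≤ 1) (hq : 0 < q)
    (hm : q + Module.finrank ℝ E ≤ m) {g : ℝ → Y} (hg : ∀ s t, ‖g s - g t‖ ≤ |s - t|)
    (hg₁ : ∀ t, ‖g t‖ ≤ 1) (k : ℕ) :
    ENNReal.ofReal (1 / (18 * 96 ^ m) * 3 * dyadicEnergy g m k 0 1)
        * μ (solidCylinder p ℓ e ∩ ℓ ⁻¹' Ico 0 1)
      ≤ dorronsoroEnergy q p μ (truncatedRidge p ℓ g 8) := by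
  have continuous_ℓ : Continuous ℓ := ℓ.continuous_of_finiteDimensional
  have isClosed_cylinder : IsClosed (solidCylinder p ℓ e) :=
    isClosed_le ((continuous_seminorm_of_finiteDimensional p).comp
      (continuous_id.sub (continuous_ℓ.smul continuous_const))) continuous_const
  have tree_bound := dyadicEnergy_le_lintegral (a := 0) (h := 1) (g := g) (m := m)
    (c := 1 / (18 * 96 ^ m)) (R := 3) isClosed_cylinder.measurableSet continuous_ℓ.measurable
    (measure_solidCylinder_inter_preimage_Ico μ hℓe) (by positivity) (by positivity)
    (Φ := fun x t => affineDeviation q p μ (truncatedRidge p ℓ g 8) x t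
      / ENNReal.ofReal (t ^ (q + 1))) k one_pos ?_
  · rw [zero_add] at tree_bound
    refine tree_bound.trans ((setLIntegral_le_lintegral _ _).trans (lintegral_mono fun x => ?_))
    exact lintegral_mono_set Ioc_subset_Ioi_self
  intro b l hb hl hbl x ⟨hx, hxb, hxl⟩ t ⟨ht, ht'⟩
  have px_le : p x ≤ 2 :=
    seminorm_le_two_of_mem_solidCylinder he ⟨hx, hb.trans hxb, by linarith⟩
  refine ofReal_le_affineDeviation_div μ hp hℓ hℓe he hq hm hg
    (continuous_of_seminorm_lipschitz p (norm_truncatedRidge_sub_le hg hg₁ hℓ 8)) hl hxb hxl.le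
    ht.le (by linarith) fun y hy => truncatedRidge_of_le ?_
  have triangle := map_add_le_add p (y - x) x
  rw [sub_add_cancel] at triangle
  linarith [p.mem_closedBall.1 hy]

lemma exists_lipschitz_le_dorronsoroEnergy [Nontrivial E] (hp : ∀ x, p x = 0 → x = 0)
    (hq : 0 < q) (hm : q + Module.finrank ℝ E ≤ m) (Y : Type*) [NormedAddCommGroup Y]
    [NormedSpace ℝ Y] :
    ∃ κ : ℝ, 0 < κ ∧ ∀ k (y : Y) s, MartingaleEnergy (normSeminorm ℝ Y) m k y s →
      ∃ f : E → Y, (∀ x y, ‖f x - f y‖ ≤ p (x - y)) ∧ tsupport f ⊆ p.closedBall 0 9 ∧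
        ENNReal.ofReal (κ * s) ≤ dorronsoroEnergy q p μ f := by
  obtain ⟨ℓ, e, hℓe, he, hℓ⟩ := exists_dual_pair hp
  set S := solidCylinder p ℓ e ∩ ℓ ⁻¹' Ico 0 1
  have S_pos : 0 < μ S := (measure_seminorm_closedBall_pos p μ _ (by norm_num)).trans_le
    (measure_mono (closedBall_half_smul_subset_solidCylinder hℓ hℓe he.le))
  have S_lt_top : μ S < ∞ :=
    (measure_mono fun x hx => by
      simpa using seminorm_le_two_of_mem_solidCylinder he.le hx).trans_lt
      (isCompact_seminorm_closedBall hp 0 2).measure_lt_top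
  refine ⟨1 / (18 * 96 ^ m) * 3 * (μ S).toReal,
    mul_pos (by positivity) (ENNReal.toReal_pos S_pos.ne' S_lt_top.ne), fun k y s hs => ?_⟩
  obtain ⟨g, hg, hg₁, s_le⟩ := hs.exists_lipschitz_bounded
  refine ⟨truncatedRidge p ℓ g 8, norm_truncatedRidge_sub_le hg hg₁ hℓ 8,
    closure_minimal (fun x hx => ?_) (isClosed_seminorm_closedBall p 0 9), ?_⟩
  · by_contra far
    rw [p.mem_closedBall, sub_zero, not_le] at far
    exact hx (truncatedRidge_of_ge (by linarith))
  · refine le_trans ?_ (dyadicEnergy_le_dorronsoroEnergy μ hp hℓ hℓe he.le hq hm hg hg₁ k)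
    rw [mul_right_comm, ENNReal.ofReal_mul' ENNReal.toReal_nonneg,
      ENNReal.ofReal_toReal S_lt_top.ne]
    gcongr

end DorronsoroEnergyLowerBound

theorem DorronsoroIneq.admitsEquivUniformlyConvexNorm {Y : Type*} [NormedAddCommGroup Y]
    [NormedSpace ℝ Y] {n : ℕ} (hn : 0 < n) {N : EuclideanSpace ℝ (Fin n) → ℝ} (hN : IsNorm N)
    {q C : ℝ} (hq : 0 < q) (h : DorronsoroIneq q C N Y) : AdmitsEquivUniformlyConvexNorm Y := by
  obtain ⟨p, rfl⟩ := hN.exists_seminorm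
  have : Nonempty (Fin n) := ⟨⟨0, hn⟩⟩
  have exponent_le : q + Module.finrank ℝ (EuclideanSpace ℝ (Fin n)) ≤ (⌈q⌉₊ + n : ℕ) := by
    rw [finrank_euclideanSpace_fin]
    push_cast
    gcongr
    exact Nat.le_ceil q
  obtain ⟨κ, κ_pos, exists_function⟩ :=
    exists_lipschitz_le_dorronsoroEnergy volume hN.1 hq exponent_le Y
  have compact_ball := isCompact_seminorm_closedBall hN.1 0 9
  set M := ENNReal.ofReal C * volume (p.closedBall 0 9)
  have M_ne_top : M ≠ ∞ := ENNReal.mul_ne_top ENNReal.ofReal_ne_top compact_ball.measure_lt_top.ne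
  refine MartingaleEnergyBound.admitsEquivUniformlyConvexNorm (m := ⌈q⌉₊ + n) (C := M.toReal / κ)
    fun k y s hs => ?_
  obtain ⟨f, f_lipschitz, f_support, energy_le⟩ := exists_function k y s hs
  have f_compact : HasCompactSupport f :=
    compact_ball.of_isClosed_subset (isClosed_tsupport f) f_support
  have energy_le_M : ENNReal.ofReal (κ * s) ≤ M :=
    energy_le.trans ((dorronsoroIneq_iff.1 h f f_compact f_lipschitz).trans
      (mul_le_mul_right (measure_mono f_support) _))
  rw [le_div_iff₀' κ_pos]
  exact (ENNReal.ofReal_le_iff_le_toReal M_ne_top).1 energy_le_M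

section ConvexPotential

/-- `G` is a convex potential with modulus of power type `q` on the ball of radius `R` of `Y`: it is
continuous with values in `[0, C]`, vanishes at the origin, and its midpoint convexity defect
dominates the `q`-th power of the distance. -/
structure IsConvexPotential {Y : Type*} [NormedAddCommGroup Y] [NormedSpace ℝ Y] (q : ℕ) (R C : ℝ)
    (G : Y → ℝ) : Prop where
  continuousOn : ContinuousOn G (closedBall 0 R)
  map_zero : G 0 = 0
  nonneg {x : Y} (hx : ‖x‖ ≤ R) : 0 ≤ G x
  le {x : Y} (hx : ‖x‖ ≤ R) : G x ≤ C
  midpoint_add_pow_le {x y : Y} (hx : ‖x‖ ≤ R) (hy : ‖y‖ ≤ R) :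
    G ((1 / 2 : ℝ) • (x + y)) + ‖x - y‖ ^ q ≤ (G x + G y) / 2

variable {Y : Type*} [NormedAddCommGroup Y] [NormedSpace ℝ Y]

lemma MartingaleEnergyBound.continuousOn_maximalEnergy {p : Seminorm ℝ Y} {m : ℕ} {C b : ℝ}
    (hC : MartingaleEnergyBound p m C) (hb : ∀ y, p y ≤ b * ‖y‖) :
    ContinuousOn (maximalEnergy p m) {x | p x ≤ 1 / 2} := by
  refine LipschitzOnWith.continuousOn (K := (4 * C * b).toNNReal)
    (LipschitzOnWith.of_dist_le_mul fun x hx y hy => ?_)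
  have hlip : |maximalEnergy p m x - maximalEnergy p m y| ≤ 4 * C * b * ‖x - y‖ :=
    calc _ ≤ 4 * C * p (x - y) := hC.abs_maximalEnergy_sub_le hx hy
      _ ≤ 4 * C * (b * ‖x - y‖) :=
        mul_le_mul_of_nonneg_left (hb _) (mul_nonneg zero_le_four hC.const_nonneg)
      _ = 4 * C * b * ‖x - y‖ := by ring
  rw [Real.dist_eq, dist_eq_norm]
  exact hlip.trans (mul_le_mul_of_nonneg_right (Real.le_coe_toNNReal _) (norm_nonneg _))

lemma MartingaleEnergyBound.exists_isConvexPotential {p : Seminorm ℝ Y} {m : ℕ} {C a b R : ℝ}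
    (hC : MartingaleEnergyBound p m C) (ha : 0 < a) (hb : 0 < b)
    (hab : ∀ y, a * ‖y‖ ≤ p y ∧ p y ≤ b * ‖y‖) (hR : 0 < R) :
    ∃ K G, IsConvexPotential (Y := Y) m R K G := by
  obtain ⟨ρ, hρ, hρR⟩ : ∃ ρ : ℝ, 0 < ρ ∧ ρ * (b * R) = 1 / 2 :=
    ⟨1 / (2 * b * R), by positivity, by field_simp⟩
  obtain ⟨c, hc, hcm⟩ : ∃ c : ℝ, 0 < c ∧ ∀ s : ℝ, c * (a * ρ / 2 * s) ^ m = s ^ m :=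
    ⟨((a * ρ / 2) ^ m)⁻¹, by positivity, fun s => by
      rw [mul_pow, inv_mul_cancel_left₀ (by positivity)]⟩
  have hhalf : ∀ {x}, ‖x‖ ≤ R → p (ρ • x) ≤ 1 / 2 := fun {x} hx => by
    rw [seminorm_smul_of_nonneg p hρ.le, ← hρR]
    gcongr
    exact (hab x).2.trans (by gcongr)
  have hone : ∀ {x}, ‖x‖ ≤ R → p (ρ • x) ≤ 1 := fun hx => (hhalf hx).trans (by norm_num)
  refine ⟨c * C, fun x => c * (maximalEnergy p m 0 - maximalEnergy p m (ρ • x)), ?_, by simp,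
    fun hx => ?_, fun hx => ?_, fun {x y} hx hy => ?_⟩
  · refine continuousOn_const.mul (continuousOn_const.sub
      ((hC.continuousOn_maximalEnergy fun y => (hab y).2).comp (by fun_prop) fun x hx => ?_))
    exact hhalf (mem_closedBall_zero_iff.1 hx)
  · exact mul_nonneg hc.le (sub_nonneg.2 (hC.maximalEnergy_le_zero (hone hx)))
  · refine mul_le_mul_of_nonneg_left ?_ hc.le
    linarith [hC.maximalEnergy_le (x := 0) (by simp), hC.maximalEnergy_nonneg (hone hx)]
  · have hmid := hC.midpoint_add_pow_le (hone hx) (hone hy)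
    rw [← smul_sub, ← smul_add, smul_comm, smul_comm (1 / 2 : ℝ) ρ (x + y)] at hmid
    have hdist : a * ρ / 2 * ‖x - y‖ ≤ p (ρ • (1 / 2 : ℝ) • (x - y)) := by
      rw [seminorm_smul_of_nonneg p hρ.le, seminorm_smul_of_nonneg p (by norm_num)]
      linarith [mul_le_mul_of_nonneg_left (hab (x - y)).1 hρ.le]
    have hpow := pow_le_pow_left₀ (by positivity) hdist m
    have := mul_le_mul_of_nonneg_left (hmid.trans' (add_le_add_right hpow _)) hc.le
    rw [mul_add, hcm] at this
    linarith

theorem exists_isConvexPotential (hY : AdmitsEquivUniformlyConvexNorm Y) :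
    ∃ q : ℕ, 2 ≤ q ∧ ∀ R : ℝ, 0 < R → ∃ C G, IsConvexPotential (Y := Y) q R C G := by
  obtain ⟨N, hN, ⟨a, b, ha, hb, hab⟩, hconv⟩ := hY
  obtain ⟨p, rfl⟩ := hN.exists_seminorm
  obtain ⟨m, hm, C, hC⟩ := exists_martingaleEnergyBound_of_uniformlyConvex hconv
  exact ⟨m, hm, fun R hR => hC.exists_isConvexPotential ha hb hab hR⟩

end ConvexPotential

section DyadicTelescope

variable {γ : ℝ → ℝ≥0∞}

lemma setLIntegral_Ioc_inv_mul_comp_two_mul {a b : ℝ} (ha : 0 ≤ a) :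
    ∫⁻ t in Ioc (2 * a) (2 * b), ENNReal.ofReal t⁻¹ * γ t =
      ∫⁻ t in Ioc a b, ENNReal.ofReal t⁻¹ * γ (2 * t) := by
  rw [← image_mul_left_Ioc zero_lt_two,
    lintegral_image_eq_lintegral_abs_deriv_mul (f' := fun _ => 2) measurableSet_Ioc
      (fun x _ => by simpa using ((hasDerivAt_id x).const_mul (2 : ℝ)).hasDerivWithinAt)
      (fun x _ y _ h => by simpa using h)]
  refine setLIntegral_congr_fun measurableSet_Ioc fun t ht => ?_
  have : 0 < t := ha.trans_lt ht.1
  rw [← mul_assoc, ← ENNReal.ofReal_mul (by positivity), abs_of_pos zero_lt_two, mul_inv,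
    mul_inv_cancel_left₀ two_ne_zero]

lemma setLIntegral_Ioc_inv_mul_le {D : ℝ≥0∞} (hγ : ∀ t, 0 < t → γ t ≤ D) {a b : ℝ} (ha : 0 < a) :
    ∫⁻ t in Ioc a b, ENNReal.ofReal t⁻¹ * γ t ≤ ENNReal.ofReal (a⁻¹ * (b - a)) * D :=
  calc ∫⁻ t in Ioc a b, ENNReal.ofReal t⁻¹ * γ t
      ≤ ∫⁻ _ in Ioc a b, ENNReal.ofReal a⁻¹ * D :=
        setLIntegral_mono' measurableSet_Ioc fun t ht => by
          gcongr
          exacts [ht.1.le, hγ t (ha.trans ht.1)]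
    _ = ENNReal.ofReal (a⁻¹ * (b - a)) * D := by
        rw [setLIntegral_const, Real.volume_Ioc, ENNReal.ofReal_mul (by positivity)]
        ring

lemma iUnion_Ioc_eq_Ioi_zero :
    ⋃ k : ℕ, Ioc (1 / ((k : ℝ) + 1)) ((k : ℝ) + 2) = Ioi (0 : ℝ) := by
  ext t
  simp only [mem_Ioi, mem_iUnion, mem_Ioc]
  refine ⟨fun ⟨k, hk, _⟩ => lt_trans (by positivity) hk, fun ht => ?_⟩
  obtain ⟨k, hk⟩ := exists_nat_gt (max t (1 / t))
  obtain ⟨hkt, hkt'⟩ := max_lt_iff.1 hk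
  exact ⟨k, (one_div_lt (by positivity) ht).2 (by linarith), by linarith⟩

variable {σ : ℝ → ℝ≥0∞} {D : ℝ≥0∞}

lemma setLIntegral_Ioc_inv_mul_le_of_telescope (hD : D ≠ ∞)
    (hstep : ∀ t, 0 < t → σ t + γ (2 * t) ≤ γ t) (hγ : ∀ t, 0 < t → γ t ≤ D)
    {a b : ℝ} (ha : 0 < a) :
    ∫⁻ t in Ioc a b, ENNReal.ofReal t⁻¹ * σ t ≤ D := by
  set X := ∫⁻ t in Ioc (2 * a) (2 * b), ENNReal.ofReal t⁻¹ * γ t with hX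
  have hX_ne_top : X ≠ ∞ :=
    ((setLIntegral_Ioc_inv_mul_le hγ (by positivity)).trans_lt
      (ENNReal.mul_lt_top ENNReal.ofReal_lt_top hD.lt_top)).ne
  have hsub : Ioc a b ⊆ Ioc a (2 * a) ∪ Ioc (2 * a) (2 * b) := fun t ht =>
    (le_or_gt t (2 * a)).imp (fun h => ⟨ht.1, h⟩) fun h => ⟨h, by linarith [ht.1, ht.2]⟩
  refine (ENNReal.add_le_add_iff_right hX_ne_top).1 ?_
  calc (∫⁻ t in Ioc a b, ENNReal.ofReal t⁻¹ * σ t) + X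
      ≤ ∫⁻ t in Ioc a b, (ENNReal.ofReal t⁻¹ * σ t + ENNReal.ofReal t⁻¹ * γ (2 * t)) := by
        rw [hX, setLIntegral_Ioc_inv_mul_comp_two_mul ha.le]
        exact le_lintegral_add _ _
    _ ≤ ∫⁻ t in Ioc a b, ENNReal.ofReal t⁻¹ * γ t :=
        setLIntegral_mono' measurableSet_Ioc fun t ht => by
          rw [← mul_add]
          gcongr
          exact hstep t (ha.trans ht.1)
    _ ≤ ∫⁻ t in Ioc a (2 * a) ∪ Ioc (2 * a) (2 * b), ENNReal.ofReal t⁻¹ * γ t :=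
        lintegral_mono_set hsub
    _ ≤ (∫⁻ t in Ioc a (2 * a), ENNReal.ofReal t⁻¹ * γ t) + X := lintegral_union_le _ _ _
    _ ≤ ENNReal.ofReal (a⁻¹ * (2 * a - a)) * D + X := by
        gcongr
        exact setLIntegral_Ioc_inv_mul_le hγ ha
    _ = D + X := by
        rw [show 2 * a - a = a by ring, inv_mul_cancel₀ ha.ne', ENNReal.ofReal_one, one_mul]

lemma setLIntegral_Ioi_inv_mul_le_of_telescope (hD : D ≠ ∞)
    (hstep : ∀ t, 0 < t → σ t + γ (2 * t) ≤ γ t) (hγ : ∀ t, 0 < t → γ t ≤ D) :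
    ∫⁻ t in Ioi (0 : ℝ), ENNReal.ofReal t⁻¹ * σ t ≤ D := by
  have hmono : Monotone fun k : ℕ => Ioc (1 / ((k : ℝ) + 1)) ((k : ℝ) + 2) := fun k l hkl =>
    Ioc_subset_Ioc (by gcongr) (by gcongr)
  rw [← iUnion_Ioc_eq_Ioi_zero, setLIntegral_iUnion_of_directed _ hmono.directed_le]
  exact iSup_le fun k => setLIntegral_Ioc_inv_mul_le_of_telescope hD hstep hγ (by positivity)

end DyadicTelescope

section DifferenceQuotient

variable {E Y : Type*} [NormedAddCommGroup E] [NormedSpace ℝ E] [NormedAddCommGroup Y]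
  [NormedSpace ℝ Y]

/-- The difference quotient of `f` at `x` in the direction `u` at scale `t`. -/
def diffQuotient (f : E → Y) (u : E) (t : ℝ) (x : E) : Y := t⁻¹ • (f (x + t • u) - f x)

variable {f : E → Y} {u : E} {t : ℝ}

lemma diffQuotient_two_mul (x : E) :
    diffQuotient f u (2 * t) x =
      (1 / 2 : ℝ) • (diffQuotient f u t (x + t • u) + diffQuotient f u t x) := by
  rw [diffQuotient, diffQuotient, diffQuotient, add_assoc x, ← add_smul, ← two_mul, mul_inv]
  module

lemma norm_diffQuotient_shift_sub (ht : 0 < t) (x : E) :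
    ‖diffQuotient f u t (x + t • u) - diffQuotient f u t x‖ = t⁻¹ * ‖secondDiff f x (t • u)‖ := by
  rw [diffQuotient, diffQuotient, ← smul_sub, norm_smul, Real.norm_of_nonneg (by positivity),
    secondDiff]
  congr 2
  module

variable {q : ℕ} {R C : ℝ} {G : Y → ℝ}

lemma norm_diffQuotient_le (hf : ∀ x (t : ℝ), 0 < t → ‖f (x + t • u) - f x‖ ≤ R * t) (ht : 0 < t)
    (x : E) : ‖diffQuotient f u t x‖ ≤ R := by
  rw [diffQuotient, norm_smul, Real.norm_of_nonneg (by positivity), inv_mul_le_iff₀ ht, mul_comm]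
  exact hf x t ht

lemma IsConvexPotential.ofReal_secondDiff_add_le (hG : IsConvexPotential q R C G)
    (hf : ∀ x (t : ℝ), 0 < t → ‖f (x + t • u) - f x‖ ≤ R * t) (ht : 0 < t) (x : E) :
    ENNReal.ofReal ((t ^ q)⁻¹) * ‖secondDiff f x (t • u)‖ₑ ^ q +
        ENNReal.ofReal (G (diffQuotient f u (2 * t) x)) ≤
      ENNReal.ofReal (G (diffQuotient f u t (x + t • u)) / 2) +
        ENNReal.ofReal (G (diffQuotient f u t x) / 2) := by
  have hR : ∀ x, ‖diffQuotient f u t x‖ ≤ R := norm_diffQuotient_le hf ht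
  have hmid := hG.midpoint_add_pow_le (hR (x + t • u)) (hR x)
  rw [← diffQuotient_two_mul, norm_diffQuotient_shift_sub ht, mul_pow, inv_pow] at hmid
  rw [← ofReal_norm, ← ENNReal.ofReal_pow (norm_nonneg _), ← ENNReal.ofReal_mul (by positivity),
    ← ENNReal.ofReal_add (by positivity) (hG.nonneg (norm_diffQuotient_le hf (by positivity) x)),
    ← ENNReal.ofReal_add (by linarith [hG.nonneg (hR (x + t • u))])
      (by linarith [hG.nonneg (hR x)])]
  exact ENNReal.ofReal_le_ofReal (by linarith)

variable [MeasurableSpace E] [BorelSpace E] {μ : Measure E}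

lemma IsConvexPotential.lintegral_secondDiff_add_le [μ.IsAddLeftInvariant]
    (hG : IsConvexPotential q R C G) (hfc : Continuous f)
    (hf : ∀ x (t : ℝ), 0 < t → ‖f (x + t • u) - f x‖ ≤ R * t) (ht : 0 < t) :
    ENNReal.ofReal ((t ^ q)⁻¹) * ∫⁻ x, ‖secondDiff f x (t • u)‖ₑ ^ q ∂μ +
        ∫⁻ x, ENNReal.ofReal (G (diffQuotient f u (2 * t) x)) ∂μ ≤
      ∫⁻ x, ENNReal.ofReal (G (diffQuotient f u t x)) ∂μ := by
  have hR : ∀ x, ‖diffQuotient f u t x‖ ≤ R := norm_diffQuotient_le hf ht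
  have hcont : Continuous fun x => G (diffQuotient f u t x) :=
    hG.continuousOn.comp_continuous (by unfold diffQuotient; fun_prop)
      fun x => mem_closedBall_zero_iff.2 (hR x)
  have hmeas : Measurable fun x => ENNReal.ofReal (G (diffQuotient f u t x) / 2) :=
    (hcont.div_const 2).measurable.ennreal_ofReal
  calc _ ≤ ∫⁻ x, (ENNReal.ofReal ((t ^ q)⁻¹) * ‖secondDiff f x (t • u)‖ₑ ^ q +
          ENNReal.ofReal (G (diffQuotient f u (2 * t) x))) ∂μ := by
        rw [← lintegral_const_mul' _ _ ENNReal.ofReal_ne_top]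
        exact le_lintegral_add _ _
    _ ≤ ∫⁻ x, (ENNReal.ofReal (G (diffQuotient f u t (x + t • u)) / 2) +
          ENNReal.ofReal (G (diffQuotient f u t x) / 2)) ∂μ :=
        lintegral_mono fun x => hG.ofReal_secondDiff_add_le hf ht x
    _ = ∫⁻ x, ENNReal.ofReal (G (diffQuotient f u t x)) ∂μ := by
        rw [lintegral_add_right _ hmeas,
          lintegral_add_right_eq_self (fun x => ENNReal.ofReal (G (diffQuotient f u t x) / 2)),
          ← lintegral_add_left hmeas]
        refine lintegral_congr fun x => ?_
        have := hG.nonneg (hR x)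
        rw [← ENNReal.ofReal_add (by positivity) (by positivity), add_halves]

lemma IsConvexPotential.lintegral_diffQuotient_le [μ.IsAddLeftInvariant]
    (hG : IsConvexPotential q R C G)
    (hf : ∀ x (t : ℝ), 0 < t → ‖f (x + t • u) - f x‖ ≤ R * t) (ht : 0 < t) :
    ∫⁻ x, ENNReal.ofReal (G (diffQuotient f u t x)) ∂μ ≤
      ENNReal.ofReal C * (2 * μ (tsupport f)) := by
  set A := tsupport f ∪ (· + t • u) ⁻¹' tsupport f
  calc ∫⁻ x, ENNReal.ofReal (G (diffQuotient f u t x)) ∂μ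
      ≤ ∫⁻ x, A.indicator (fun _ => ENNReal.ofReal C) x ∂μ := lintegral_mono fun x => by
        by_cases hx : x ∈ A
        · rw [indicator_of_mem hx]
          exact ENNReal.ofReal_le_ofReal (hG.le (norm_diffQuotient_le hf ht x))
        · obtain ⟨hx₁, hx₂⟩ := not_or.1 hx
          simp [diffQuotient, image_eq_zero_of_notMem_tsupport hx₁,
            image_eq_zero_of_notMem_tsupport hx₂, hG.map_zero]
    _ ≤ ENNReal.ofReal C * μ A := lintegral_indicator_const_le _ _
    _ ≤ ENNReal.ofReal C * (2 * μ (tsupport f)) := by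
        gcongr
        refine (measure_union_le _ _).trans ?_
        rw [measure_preimage_add_right, two_mul]

theorem IsConvexPotential.lintegral_secondDiff_le [μ.IsAddLeftInvariant]
    [IsFiniteMeasureOnCompacts μ] (hG : IsConvexPotential q R C G) (hfc : Continuous f)
    (hfs : HasCompactSupport f)
    (hf : ∀ x (t : ℝ), 0 < t → ‖f (x + t • u) - f x‖ ≤ R * t) :
    ∫⁻ t in Ioi (0 : ℝ), ENNReal.ofReal ((t ^ (q + 1))⁻¹) *
        ∫⁻ x, ‖secondDiff f x (t • u)‖ₑ ^ q ∂μ ≤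
      ENNReal.ofReal C * (2 * μ (tsupport f)) := by
  have hfin : ENNReal.ofReal C * (2 * μ (tsupport f)) ≠ ∞ :=
    ENNReal.mul_ne_top ENNReal.ofReal_ne_top
      (ENNReal.mul_ne_top ENNReal.ofNat_ne_top hfs.isCompact.measure_lt_top.ne)
  refine le_trans (le_of_eq ?_) (setLIntegral_Ioi_inv_mul_le_of_telescope hfin
    (γ := fun t => ∫⁻ x, ENNReal.ofReal (G (diffQuotient f u t x)) ∂μ)
    (fun t ht => hG.lintegral_secondDiff_add_le hfc hf ht)
    (fun t ht => hG.lintegral_diffQuotient_le hf ht))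
  refine setLIntegral_congr_fun measurableSet_Ioi fun t ht => ?_
  rw [pow_succ', mul_inv, ENNReal.ofReal_mul (inv_nonneg.2 (mem_Ioi.1 ht).le), mul_assoc]

end DifferenceQuotient

section ScaleEnergy

lemma add_pow_le_two_pow_mul (q : ℕ) (a b : ℝ≥0∞) : (a + b) ^ q ≤ 2 ^ q * (a ^ q + b ^ q) :=
  calc (a + b) ^ q ≤ (2 * max a b) ^ q := by
        rw [two_mul]
        gcongr
        exacts [le_max_left a b, le_max_right a b]
    _ ≤ 2 ^ q * (a ^ q + b ^ q) := by
        rw [mul_pow]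
        gcongr
        rcases max_choice a b with h | h <;> rw [h]
        exacts [le_self_add, le_add_self]

lemma enorm_integral_pow_le_lintegral {α Y : Type*} [MeasurableSpace α] [NormedAddCommGroup Y]
    [NormedSpace ℝ Y] {ν : Measure α} [IsProbabilityMeasure ν] {q : ℕ} (hq : 1 ≤ q) {ψ : α → Y}
    (hψ : AEStronglyMeasurable ψ ν) : ‖∫ r, ψ r ∂ν‖ₑ ^ q ≤ ∫⁻ r, ‖ψ r‖ₑ ^ q ∂ν := by
  have hmono := eLpNorm'_le_eLpNorm'_of_exponent_le (p := 1) (q := q) one_pos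
    (by exact_mod_cast hq) ν hψ
  simp only [eLpNorm', ENNReal.rpow_one, div_one, ENNReal.rpow_natCast] at hmono
  calc ‖∫ r, ψ r ∂ν‖ₑ ^ q
      ≤ ((∫⁻ r, ‖ψ r‖ₑ ^ q ∂ν) ^ (1 / (q : ℝ))) ^ q := by
        gcongr
        exact (enorm_integral_le_lintegral_enorm ψ).trans hmono
    _ = ∫⁻ r, ‖ψ r‖ₑ ^ q ∂ν := by
        rw [one_div, ENNReal.rpow_inv_natCast_pow (by lia)]

variable {E Y : Type*} [MeasurableSpace E] [NormedAddCommGroup Y]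

/-- The `q`-energy `∫_X ∫_0^∞ ‖φ(t, x)‖^q / t^{q+1} dt dx` of a quantity `φ` depending on a scale
and a point. -/
def scaleEnergy (q : ℕ) (μ : Measure E) (φ : ℝ × E → Y) : ℝ≥0∞ :=
  ∫⁻ z, ENNReal.ofReal ((z.1 ^ (q + 1))⁻¹) * ‖φ z‖ₑ ^ q ∂((volume.restrict (Ioi (0 : ℝ))).prod μ)

variable {q : ℕ} {μ : Measure E} {φ ψ : ℝ × E → Y}

lemma scaleEnergy_smul_le [NormedSpace ℝ Y] {c : ℝ} (hc : |c| ≤ 1) :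
    scaleEnergy q μ (fun z => c • φ z) ≤ scaleEnergy q μ φ := by
  unfold scaleEnergy
  gcongr with z
  rw [← ofReal_norm, ← ofReal_norm, norm_smul, Real.norm_eq_abs]
  exact ENNReal.ofReal_le_ofReal (mul_le_of_le_one_left (norm_nonneg _) hc)

variable [NormedAddCommGroup E] [BorelSpace E] [SecondCountableTopology E]

lemma measurable_scaleEnergy_integrand (hφ : Continuous φ) :
    Measurable fun z : ℝ × E => ENNReal.ofReal ((z.1 ^ (q + 1))⁻¹) * ‖φ z‖ₑ ^ q :=
  ((measurable_fst.pow_const _).inv).ennreal_ofReal.mul (hφ.enorm.measurable.pow_const q)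

lemma scaleEnergy_add_le (hφ : Continuous φ) :
    scaleEnergy q μ (fun z => φ z + ψ z) ≤ 2 ^ q * (scaleEnergy q μ φ + scaleEnergy q μ ψ) := by
  unfold scaleEnergy
  rw [← lintegral_add_left (measurable_scaleEnergy_integrand hφ),
    ← lintegral_const_mul' _ _ (by finiteness)]
  refine lintegral_mono fun z => ?_
  calc ENNReal.ofReal ((z.1 ^ (q + 1))⁻¹) * ‖φ z + ψ z‖ₑ ^ q
      ≤ ENNReal.ofReal ((z.1 ^ (q + 1))⁻¹) * (2 ^ q * (‖φ z‖ₑ ^ q + ‖ψ z‖ₑ ^ q)) := by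
        gcongr
        exact (pow_le_pow_left' (enorm_add_le _ _) q).trans (add_pow_le_two_pow_mul q _ _)
    _ = _ := by ring

lemma scaleEnergy_sub_le (hφ : Continuous φ) :
    scaleEnergy q μ (fun z => φ z - ψ z) ≤ 2 ^ q * (scaleEnergy q μ φ + scaleEnergy q μ ψ) := by
  simpa only [sub_eq_add_neg, scaleEnergy, enorm_neg] using
    scaleEnergy_add_le (ψ := fun z => -ψ z) hφ

variable [SFinite μ]

lemma scaleEnergy_eq (hφ : Continuous φ) :
    scaleEnergy q μ φ = ∫⁻ t in Ioi (0 : ℝ), ENNReal.ofReal ((t ^ (q + 1))⁻¹) *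
      ∫⁻ x, ‖φ (t, x)‖ₑ ^ q ∂μ := by
  rw [scaleEnergy, lintegral_prod _ (measurable_scaleEnergy_integrand hφ).aemeasurable]
  simp only [lintegral_const_mul' _ _ ENNReal.ofReal_ne_top]

lemma scaleEnergy_intervalIntegral_le [NormedSpace ℝ Y] (hq : 1 ≤ q) {ψ : ℝ → ℝ × E → Y}
    (hψ : Continuous fun z : ℝ × (ℝ × E) => ψ z.1 z.2) {K : ℝ≥0∞}
    (hK : ∀ r ∈ Ioc (0 : ℝ) 1, scaleEnergy q μ (ψ r) ≤ K) :
    scaleEnergy q μ (fun z => ∫ r in (0 : ℝ)..1, ψ r z) ≤ K := by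
  have : IsProbabilityMeasure (volume.restrict (Ioc (0 : ℝ) 1)) := ⟨by simp⟩
  have hmeas : Measurable fun z : (ℝ × E) × ℝ =>
      ENNReal.ofReal ((z.1.1 ^ (q + 1))⁻¹) * ‖ψ z.2 z.1‖ₑ ^ q := by
    have hψ' : Continuous fun z : (ℝ × E) × ℝ => ψ z.2 z.1 := by fun_prop
    exact (((measurable_fst.comp measurable_fst).pow_const _).inv).ennreal_ofReal.mul
      (hψ'.enorm.measurable.pow_const q)
  calc scaleEnergy q μ (fun z => ∫ r in (0 : ℝ)..1, ψ r z)
      ≤ ∫⁻ z, (∫⁻ r in Ioc (0 : ℝ) 1, ENNReal.ofReal ((z.1 ^ (q + 1))⁻¹) * ‖ψ r z‖ₑ ^ q)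
        ∂((volume.restrict (Ioi (0 : ℝ))).prod μ) := by
        refine lintegral_mono fun z => ?_
        rw [lintegral_const_mul' _ _ ENNReal.ofReal_ne_top]
        gcongr
        simp only [intervalIntegral.integral_of_le zero_le_one]
        exact enorm_integral_pow_le_lintegral hq
          (by fun_prop : Continuous fun r => ψ r z).aestronglyMeasurable
    _ = ∫⁻ r in Ioc (0 : ℝ) 1, scaleEnergy q μ (ψ r) := lintegral_lintegral_swap hmeas.aemeasurable
    _ ≤ ∫⁻ _ in Ioc (0 : ℝ) 1, K := setLIntegral_mono' measurableSet_Ioc hK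
    _ = K := by simp

lemma scaleEnergy_comp_shift [NormedSpace ℝ E] [μ.IsAddLeftInvariant] (hφ : Continuous φ) (v : E) :
    scaleEnergy q μ (fun z => φ (z.1, z.2 + z.1 • v)) = scaleEnergy q μ φ := by
  rw [scaleEnergy_eq hφ, scaleEnergy_eq (by fun_prop)]
  exact lintegral_congr fun t => congrArg _ <|
    lintegral_add_right_eq_self (μ := μ) (fun x => ‖φ (t, x)‖ₑ ^ q) (t • v)

end ScaleEnergy

section MixedDifference

variable {E Y : Type*} [NormedAddCommGroup E] [NormedSpace ℝ E] [NormedAddCommGroup Y]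

/-- The mixed difference of `f` at the point `z.2` and scale `z.1` in the directions `u` and `v`;
it vanishes when `f` is affine. -/
def mixedDiff (f : E → Y) (u v : E) (z : ℝ × E) : Y :=
  f (z.2 + z.1 • (u + v)) - f (z.2 + z.1 • u) - f (z.2 + z.1 • v) + f z.2

lemma continuous_mixedDiff {f : E → Y} (hf : Continuous f) (u v : E) :
    Continuous (mixedDiff f u v) := by
  unfold mixedDiff
  fun_prop

variable [NormedSpace ℝ Y]

/-- Both second differences have the same midpoint, namely `z.2 + z.1 • (u + v) / 2`. -/
lemma mixedDiff_eq_secondDiff_sub (f : E → Y) (u v : E) (z : ℝ × E) :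
    mixedDiff f u v z =
      secondDiff f z.2 (z.1 • (1 / 2 : ℝ) • (u + v)) -
        secondDiff f (z.2 + z.1 • v) (z.1 • (1 / 2 : ℝ) • (u - v)) := by
  rw [secondDiff, secondDiff,
    show z.2 + z.1 • v + z.1 • (1 / 2 : ℝ) • (u - v) = z.2 + z.1 • (1 / 2 : ℝ) • (u + v) by module,
    show z.2 + z.1 • (1 / 2 : ℝ) • (u + v) + z.1 • (1 / 2 : ℝ) • (u + v) = z.2 + z.1 • (u + v) by
      module,
    show z.2 + z.1 • (1 / 2 : ℝ) • (u + v) + z.1 • (1 / 2 : ℝ) • (u - v) = z.2 + z.1 • u by module,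
    mixedDiff]
  module

section

variable {ι : Type*}

/-- The error made at `z.2 + z.1 • ∑ i ∈ s, σ i • e i` by the affine mapping that interpolates `f`
at `z.2` and at the points `z.2 + z.1 • e i`. -/
def interpolationError (f : E → Y) (s : Finset ι) (e : ι → E) (σ : ι → ℝ) (z : ℝ × E) : Y :=
  f (z.2 + z.1 • ∑ i ∈ s, σ i • e i) - f z.2 - ∑ i ∈ s, σ i • (f (z.2 + z.1 • e i) - f z.2)

lemma continuous_interpolationError {f : E → Y} (hf : Continuous f) (s : Finset ι) (e : ι → E) :
    Continuous fun y : (ι → ℝ) × (ℝ × E) => interpolationError f s e y.1 y.2 := by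
  unfold interpolationError
  fun_prop

lemma interpolationError_insert [DecidableEq ι] {f : E → Y} {e : ι → E} {σ : ι → ℝ} {s : Finset ι}
    {i : ι} (hi : i ∉ s) (z : ℝ × E) :
    interpolationError f (insert i s) e σ z = interpolationError f s e σ z +
      (((f (z.2 + z.1 • σ i • e i) - f z.2) - σ i • (f (z.2 + z.1 • e i) - f z.2)) +
        mixedDiff f (∑ j ∈ s, σ j • e j) (σ i • e i) z) := by
  rw [interpolationError, Finset.sum_insert hi, Finset.sum_insert hi, interpolationError, mixedDiff,
    add_comm (σ i • e i)]
  abel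

end

lemma sub_smul_eq_intervalIntegral [CompleteSpace Y] {b : ℝ → Y} (hb : Continuous b) (σ : ℝ) :
    b σ - σ • b 1 = ∫ r in (0 : ℝ)..1,
      (σ • (b (σ * r + 1) - b (σ * r) - b 1) - (b (r + σ) - b r - b σ)) := by
  have hcont : ∀ {h : ℝ → Y}, Continuous h → ∀ a c, IntervalIntegrable h volume a c :=
    fun h a c => h.intervalIntegrable a c
  have hsplit : (∫ r in (0 : ℝ)..1, b r) + ∫ r in (1 : ℝ)..(1 + σ), b r =
      (∫ r in (0 : ℝ)..σ, b r) + ∫ r in σ..(1 + σ), b r := by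
    simp only [intervalIntegral.integral_add_adjacent_intervals (hcont hb _ _) (hcont hb _ _)]
  have hscaled : ∫ r in (0 : ℝ)..1, σ • (b (σ * r + 1) - b (σ * r) - b 1) =
      (∫ r in (1 : ℝ)..(1 + σ), b r) - (∫ r in (0 : ℝ)..σ, b r) - σ • b 1 := by
    rw [intervalIntegral.integral_smul,
      intervalIntegral.smul_integral_comp_mul_left (fun r => b (r + 1) - b r - b 1) σ,
      intervalIntegral.integral_sub (hcont (by fun_prop) _ _) (hcont (by fun_prop) _ _),
      intervalIntegral.integral_sub (hcont (by fun_prop) _ _) (hcont (by fun_prop) _ _),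
      intervalIntegral.integral_comp_add_right, intervalIntegral.integral_const]
    simp only [mul_zero, mul_one, zero_add, sub_zero, add_comm σ 1]
  have hshifted : ∫ r in (0 : ℝ)..1, (b (r + σ) - b r - b σ) =
      (∫ r in σ..(1 + σ), b r) - (∫ r in (0 : ℝ)..1, b r) - b σ := by
    rw [intervalIntegral.integral_sub (hcont (by fun_prop) _ _) (hcont (by fun_prop) _ _),
      intervalIntegral.integral_sub (hcont (by fun_prop) _ _) (hcont (by fun_prop) _ _),
      intervalIntegral.integral_comp_add_right, intervalIntegral.integral_const]
    simp only [zero_add, sub_zero, one_smul]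
  rw [intervalIntegral.integral_sub (hcont (by fun_prop) _ _) (hcont (by fun_prop) _ _), hscaled,
    hshifted, eq_sub_of_add_eq' hsplit.symm]
  module

variable [MeasurableSpace E] [BorelSpace E] [SecondCountableTopology E] {μ : Measure E} [SFinite μ]
  {q : ℕ} {R : ℝ} {p : Seminorm ℝ E} {f : E → Y} {u v : E}

section

variable {C : ℝ} {G : Y → ℝ} [μ.IsAddLeftInvariant] [IsFiniteMeasureOnCompacts μ]

lemma IsConvexPotential.scaleEnergy_secondDiff_le (hG : IsConvexPotential q R C G)
    (hfc : Continuous f) (hfs : HasCompactSupport f) (hf : ∀ x y, ‖f x - f y‖ ≤ p (x - y))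
    (hu : p u ≤ R) :
    scaleEnergy q μ (fun z => secondDiff f z.2 (z.1 • u)) ≤
      ENNReal.ofReal C * (2 * μ (tsupport f)) := by
  rw [scaleEnergy_eq (by unfold secondDiff; fun_prop)]
  refine hG.lintegral_secondDiff_le hfc hfs fun x t ht => (hf _ _).trans ?_
  rw [add_sub_cancel_left, seminorm_smul_of_nonneg p ht.le, mul_comm]
  gcongr

theorem IsConvexPotential.scaleEnergy_mixedDiff_le (hG : IsConvexPotential q R C G)
    (hfc : Continuous f) (hfs : HasCompactSupport f) (hf : ∀ x y, ‖f x - f y‖ ≤ p (x - y))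
    (hu : p u ≤ R) (hv : p v ≤ R) :
    scaleEnergy q μ (mixedDiff f u v) ≤ 2 ^ (q + 2) * ENNReal.ofReal C * μ (tsupport f) := by
  set φ : E → ℝ × E → Y := fun w z => secondDiff f z.2 (z.1 • w) with hφ
  have hφc : ∀ w, Continuous (φ w) := fun w => by
    simp only [hφ, secondDiff]
    fun_prop
  have hhalf : ∀ w, p w ≤ 2 * R → p ((1 / 2 : ℝ) • w) ≤ R := fun w hw => by
    rw [seminorm_smul_of_nonneg p (by norm_num)]
    linarith
  have hmixed : mixedDiff f u v = fun z => φ ((1 / 2 : ℝ) • (u + v)) z -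
      φ ((1 / 2 : ℝ) • (u - v)) (z.1, z.2 + z.1 • v) :=
    funext fun z => mixedDiff_eq_secondDiff_sub f u v z
  calc scaleEnergy q μ (mixedDiff f u v)
      ≤ 2 ^ q * (scaleEnergy q μ (φ ((1 / 2 : ℝ) • (u + v))) +
          scaleEnergy q μ (φ ((1 / 2 : ℝ) • (u - v)))) := by
        rw [hmixed, ← scaleEnergy_comp_shift (hφc ((1 / 2 : ℝ) • (u - v))) v]
        exact scaleEnergy_sub_le (hφc _)
    _ ≤ 2 ^ q * (ENNReal.ofReal C * (2 * μ (tsupport f)) +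
          ENNReal.ofReal C * (2 * μ (tsupport f))) := by
        gcongr
        · exact hG.scaleEnergy_secondDiff_le hfc hfs hf
            (hhalf _ (by linarith [map_add_le_add p u v]))
        · exact hG.scaleEnergy_secondDiff_le hfc hfs hf
            (hhalf _ (by linarith [map_sub_le_add p u v]))
    _ = 2 ^ (q + 2) * ENNReal.ofReal C * μ (tsupport f) := by ring

end

variable [CompleteSpace Y] {D : ℝ≥0∞}

lemma scaleEnergy_smul_defect_le (hq : 1 ≤ q) (hfc : Continuous f)
    (hD : ∀ u v, p u ≤ R → p v ≤ R → scaleEnergy q μ (mixedDiff f u v) ≤ D)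
    (hu : p u ≤ R) {σ : ℝ} (hσ : |σ| ≤ 1) :
    scaleEnergy q μ (fun z => (f (z.2 + z.1 • σ • u) - f z.2) - σ • (f (z.2 + z.1 • u) - f z.2)) ≤
      2 ^ (q + 1) * D := by
  set ψ : ℝ → ℝ × E → Y := fun r z =>
    σ • mixedDiff f ((σ * r) • u) u z - mixedDiff f (r • u) (σ • u) z with hψ
  have hintegral : (fun z : ℝ × E =>
      (f (z.2 + z.1 • σ • u) - f z.2) - σ • (f (z.2 + z.1 • u) - f z.2)) =
      fun z => ∫ r in (0 : ℝ)..1, ψ r z := by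
    funext z
    have hb := sub_smul_eq_intervalIntegral
      (b := fun r => f (z.2 + z.1 • r • u) - f z.2) (by fun_prop) σ
    simp only [one_smul] at hb
    rw [hb]
    congr 1
    funext r
    simp only [hψ, mixedDiff, add_smul, one_smul]
    congr 2 <;> abel
  have hsmul : ∀ {c : ℝ}, |c| ≤ 1 → p (c • u) ≤ R := fun {c} hc => by
    rw [map_smul_eq_mul, Real.norm_eq_abs]
    exact (mul_le_of_le_one_left (apply_nonneg p u) hc).trans hu
  rw [hintegral]
  refine scaleEnergy_intervalIntegral_le hq (by simp only [hψ, mixedDiff]; fun_prop)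
    fun r hr => ?_
  have hr₁ : |r| ≤ 1 := abs_le.2 ⟨by linarith [hr.1], hr.2⟩
  calc scaleEnergy q μ (ψ r) ≤ 2 ^ q * (D + D) := by
        refine (scaleEnergy_sub_le ((continuous_mixedDiff hfc _ _).const_smul σ)).trans ?_
        gcongr
        · refine (scaleEnergy_smul_le hσ).trans (hD _ _ (hsmul ?_) hu)
          rw [abs_mul]
          exact mul_le_one₀ hσ (abs_nonneg r) hr₁
        · exact hD _ _ (hsmul hr₁) (hsmul hσ)
    _ = 2 ^ (q + 1) * D := by ring

variable {ι : Type*} {e : ι → E} {σ : ι → ℝ}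

theorem scaleEnergy_interpolationError_le (hq : 1 ≤ q) (hfc : Continuous f)
    (hD : ∀ u v, p u ≤ R → p v ≤ R → scaleEnergy q μ (mixedDiff f u v) ≤ D)
    (hσ : ∀ i, |σ i| ≤ 1) (s : Finset ι) (hs : ∑ i ∈ s, p (e i) ≤ R) :
    scaleEnergy q μ (interpolationError f s e σ) ≤ (2 ^ (3 * q + 2)) ^ s.card * D := by
  classical
  have hsmul : ∀ j, p (σ j • e j) ≤ p (e j) := fun j => by
    rw [map_smul_eq_mul, Real.norm_eq_abs]
    exact mul_le_of_le_one_left (apply_nonneg p _) (hσ j)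
  induction s using Finset.induction_on with
  | empty => simp [interpolationError, scaleEnergy, (by lia : q ≠ 0)]
  | insert i s hi ih =>
    rw [Finset.sum_insert hi] at hs
    have hs_nonneg : 0 ≤ ∑ j ∈ s, p (e j) := Finset.sum_nonneg fun j _ => apply_nonneg p _
    have hei : p (e i) ≤ R := by linarith
    have hsum : p (∑ j ∈ s, σ j • e j) ≤ R :=
      calc p (∑ j ∈ s, σ j • e j) ≤ ∑ j ∈ s, p (σ j • e j) :=
          Finset.le_sum_of_subadditive p (map_zero p).le (map_add_le_add p) s _
        _ ≤ ∑ j ∈ s, p (e j) := Finset.sum_le_sum fun j _ => hsmul j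
        _ ≤ R := by linarith [apply_nonneg p (e i)]
    have hone : (1 : ℝ≥0∞) ≤ (2 ^ (3 * q + 2)) ^ s.card :=
      one_le_pow₀ (one_le_pow₀ one_le_two)
    have hfi : Continuous (interpolationError f s e σ) :=
      (continuous_interpolationError hfc s e).comp (by fun_prop : Continuous fun z => (σ, z))
    rw [funext (interpolationError_insert hi), Finset.card_insert_of_notMem hi]
    set L : ℝ≥0∞ := (2 ^ (3 * q + 2)) ^ s.card
    calc _ ≤ 2 ^ q * (L * D + 2 ^ q * (2 ^ (q + 1) * D + D)) := by
          refine (scaleEnergy_add_le hfi).trans ?_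
          gcongr
          · exact ih (by linarith [apply_nonneg p (e i)])
          · refine (scaleEnergy_add_le (by fun_prop)).trans ?_
            gcongr
            · exact scaleEnergy_smul_defect_le hq hfc hD hei (hσ i)
            · exact hD _ _ hsum ((hsmul i).trans hei)
      _ ≤ 2 ^ q * (2 ^ q * 2 ^ q * (L * D) +
            2 ^ q * (2 ^ (q + 1) * (L * D) + 2 ^ q * (L * D))) := by
          have hpow : (1 : ℝ≥0∞) ≤ 2 ^ q := one_le_pow₀ one_le_two
          have hLD : D ≤ L * D := le_mul_of_one_le_left' hone
          gcongr 2 ^ q * (?_ + 2 ^ q * (2 ^ (q + 1) * ?_ + ?_))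
          · exact le_mul_of_one_le_left' (one_le_mul hpow hpow)
          exact hLD.trans (le_mul_of_one_le_left' hpow)
      _ = L * 2 ^ (3 * q + 2) * D := by ring

end MixedDifference

section Auerbach

open Module

variable {E : Type*} [NormedAddCommGroup E] [NormedSpace ℝ E] [FiniteDimensional ℝ E]
  {p : Seminorm ℝ E} {ι : Type*} [Fintype ι]

lemma continuous_basis_det [DecidableEq ι] (B : Basis ι ℝ E) : Continuous fun v => B.det v := by
  simp only [Basis.det_apply]
  exact (continuous_matrix fun i j => (B.coord i).continuous_of_finiteDimensional.comp
    (continuous_apply j)).matrix_det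

lemma basis_det_update_self {R M : Type*} [CommRing R] [AddCommGroup M] [Module R M]
    [DecidableEq ι] (b : Basis ι R M) (i : ι) (z : M) :
    b.det (Function.update b i z) = b.repr z i := by
  have cramer : b.det.toMultilinearMap.toLinearMap b i = b.coord i := b.ext fun j => by
    rcases eq_or_ne i j with rfl | hij
    · simp [b.det_self]
    · simp [b.det.map_update_self b hij, hij.symm]
  exact LinearMap.congr_fun cramer z

lemma exists_basis_abs_det_le_one [DecidableEq ι] (hp : ∀ x, p x = 0 → x = 0) (B : Basis ι ℝ E) :
    ∃ b : Basis ι ℝ E, (∀ i, p (b i) ≤ 1) ∧ ∀ v : ι → E, (∀ i, p (v i) ≤ 1) → |b.det v| ≤ 1 := by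
  obtain ⟨v, hv, hmax⟩ : ∃ v : ι → E, (∀ i, p (v i) ≤ 1) ∧
      ∀ w : ι → E, (∀ i, p (w i) ≤ 1) → |B.det w| ≤ |B.det v| := by
    have := (isCompact_univ_pi fun _ : ι => isCompact_seminorm_closedBall hp 0 1).exists_isMaxOn
      ⟨0, fun i _ => by simp⟩ (continuous_basis_det B).abs.continuousOn
    simpa [isMaxOn_iff, mem_univ_pi] using this
  have det_pos : 0 < |B.det v| := by
    have hpB : ∀ i, 0 < p (B i) := fun i =>
      (apply_nonneg p _).lt_of_ne' fun h => B.ne_zero i (hp _ h)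
    refine lt_of_lt_of_le ?_ (hmax (fun i => (p (B i))⁻¹ • B i) fun i => ?_)
    · rw [B.det.map_smul_univ, B.det_self, smul_eq_mul, mul_one]
      exact abs_pos.2 (Finset.prod_pos fun i _ => inv_pos.2 (hpB i)).ne'
    · rw [seminorm_smul_of_nonneg p (inv_pos.2 (hpB i)).le, inv_mul_cancel₀ (hpB i).ne']
  obtain ⟨b, rfl⟩ : ∃ b : Basis ι ℝ E, ⇑b = v := by
    obtain ⟨hli, hsp⟩ := (Basis.is_basis_iff_det B).2 (abs_pos.1 det_pos).isUnit
    exact ⟨Basis.mk hli hsp.ge, Basis.coe_mk hli hsp.ge⟩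
  refine ⟨b, hv, fun w hw => ?_⟩
  have hw_le := hmax w hw
  rwa [B.det.eq_smul_basis_det b, AlternatingMap.smul_apply, AlternatingMap.smul_apply,
    b.det_self, smul_eq_mul, smul_eq_mul, mul_one, abs_mul, mul_le_iff_le_one_right det_pos]
    at hw_le

theorem exists_auerbach_basis {κ : Type*} [Finite κ] (hp : ∀ x, p x = 0 → x = 0)
    (B : Basis κ ℝ E) : ∃ b : Basis κ ℝ E, (∀ i, p (b i) ≤ 1) ∧ ∀ z i, |b.repr z i| ≤ p z := by
  classical
  have := Fintype.ofFinite κ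
  obtain ⟨b, hb, hdet⟩ := exists_basis_abs_det_le_one hp B
  refine ⟨b, hb, fun z i => ?_⟩
  rcases (apply_nonneg p z).eq_or_lt with hz | hz
  · simp [hp z hz.symm]
  have coord_le : |b.repr ((p z)⁻¹ • z) i| ≤ 1 := by
    rw [← basis_det_update_self]
    refine hdet _ fun j => ?_
    rcases eq_or_ne j i with rfl | hij
    · rw [Function.update_self, seminorm_smul_of_nonneg p (inv_pos.2 hz).le, inv_mul_cancel₀ hz.ne']
    · rw [Function.update_of_ne hij]
      exact hb j
  rwa [map_smul, Finsupp.smul_apply, smul_eq_mul, abs_mul, abs_of_pos (inv_pos.2 hz),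
    inv_mul_le_one₀ hz] at coord_le

end Auerbach

section DorronsoroEstimate

variable {E : Type*} [NormedAddCommGroup E] [NormedSpace ℝ E]

section Interpolation

variable {Y : Type*} [NormedAddCommGroup Y] [NormedSpace ℝ Y] {ι : Type*} [Fintype ι]

/-- The affine mapping that interpolates `f` at `x` and at the points `x + t • b i`. -/
def affineInterpolation (b : Module.Basis ι ℝ E) (f : E → Y) (x : E) (t : ℝ) : E →ᵃ[ℝ] Y :=
  (t⁻¹ • b.constr ℝ fun i => f (x + t • b i) - f x).toAffineMap.comp
    (AffineMap.id ℝ E - AffineMap.const ℝ E x) + AffineMap.const ℝ E (f x)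

lemma sub_affineInterpolation (b : Module.Basis ι ℝ E) (f : E → Y) (x : E) {t : ℝ} (ht : t ≠ 0)
    (z : E) : f (x + t • z) - affineInterpolation b f x t (x + t • z) =
      interpolationError f Finset.univ b (b.equivFun z) (t, x) := by
  have hvalue : affineInterpolation b f x t (x + t • z) =
      ∑ i, b.equivFun z i • (f (x + t • b i) - f x) + f x := by
    simp [affineInterpolation, Module.Basis.constr_apply_fintype, smul_smul, ht]
  rw [hvalue, interpolationError, b.sum_equivFun]
  abel

end Interpolation

variable [FiniteDimensional ℝ E]
  [MeasurableSpace E] [BorelSpace E] {μ : Measure E} [μ.IsAddHaarMeasure] {p : Seminorm ℝ E}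

open Module in
lemma setLAverage_seminorm_closedBall (x : E) {t : ℝ} (ht : 0 < t) (φ : E → ℝ≥0∞) :
    ⨍⁻ y in p.closedBall x t, φ y ∂μ = ⨍⁻ z in p.closedBall 0 1, φ (x + t • z) ∂μ := by
  have hpre : (fun z => x + t • z) ⁻¹' p.closedBall x t = p.closedBall 0 1 := by
    ext z
    simp [Seminorm.mem_closedBall, seminorm_smul_of_nonneg p ht.le, ht]
  have hT : MeasurableEmbedding fun z : E => x + t • z :=
    ((Homeomorph.smulOfNeZero t ht.ne').trans (Homeomorph.addLeft x)).measurableEmbedding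
  have hmap : μ.map (fun z => x + t • z) = ENNReal.ofReal ((t ^ finrank ℝ E)⁻¹) • μ := by
    rw [← Function.comp_def (fun y => x + y) fun z => t • z,
      ← Measure.map_map (measurable_const_add x) (measurable_const_smul t),
      Measure.map_addHaar_smul μ ht.ne', Measure.map_smul, map_add_left_eq_self,
      abs_of_pos (by positivity)]
  have hlintegral : ∫⁻ z in p.closedBall 0 1, φ (x + t • z) ∂μ =
      ENNReal.ofReal (t ^ finrank ℝ E)⁻¹ * ∫⁻ y in p.closedBall x t, φ y ∂μ := by
    rw [← hpre, ← hT.lintegral_map, ← hT.restrict_map, hmap, Measure.restrict_smul,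
      lintegral_smul_measure, smul_eq_mul]
  rw [setLAverage_eq, setLAverage_eq, hlintegral, measure_seminorm_closedBall p μ x ht,
    ENNReal.div_eq_inv_mul, ENNReal.div_eq_inv_mul, ENNReal.ofReal_inv_of_pos (by positivity),
    ENNReal.mul_inv (.inl (by positivity)) (.inl ofReal_ne_top)]
  ring

variable {Y : Type*} [NormedAddCommGroup Y] [NormedSpace ℝ Y] {ι : Type*} [Fintype ι] {q : ℕ}
  {f : E → Y}

lemma affineDeviation_div_le_setLAverage (b : Module.Basis ι ℝ E) (x : E) {t : ℝ} (ht : 0 < t) :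
    affineDeviation q p μ f x t / ENNReal.ofReal (t ^ ((q : ℝ) + 1)) ≤
      ⨍⁻ z in p.closedBall 0 1, ENNReal.ofReal ((t ^ (q + 1))⁻¹) *
        ‖interpolationError f Finset.univ b (b.equivFun z) (t, x)‖ₑ ^ q ∂μ := by
  have hpow : t ^ ((q : ℝ) + 1) = t ^ (q + 1) := by exact_mod_cast Real.rpow_natCast t (q + 1)
  calc affineDeviation q p μ f x t / ENNReal.ofReal (t ^ ((q : ℝ) + 1))
      ≤ ENNReal.ofReal ((t ^ (q + 1))⁻¹) *
          ⨍⁻ y in p.closedBall x t, ‖f y - affineInterpolation b f x t y‖ₑ ^ q ∂μ := by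
        rw [hpow, ENNReal.div_eq_inv_mul, ENNReal.ofReal_inv_of_pos (by positivity),
          setLAverage_eq]
        gcongr
        exact (iInf_le _ (affineInterpolation b f x t)).trans_eq
          (by simp only [ENNReal.rpow_natCast])
    _ = _ := by
        rw [setLAverage_seminorm_closedBall x ht, laverage, laverage,
          lintegral_const_mul' _ _ ofReal_ne_top]
        simp only [sub_affineInterpolation b f x ht.ne']

lemma dorronsoroEnergy_le_setLAverage (hf : Continuous f) (b : Module.Basis ι ℝ E) :
    dorronsoroEnergy q p μ f ≤
      ⨍⁻ z in p.closedBall 0 1,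
        scaleEnergy q μ (interpolationError f Finset.univ b (b.equivFun z)) ∂μ := by
  set W : E → ℝ × E → ℝ≥0∞ := fun z y => ENNReal.ofReal ((y.1 ^ (q + 1))⁻¹) *
    ‖interpolationError f Finset.univ b (b.equivFun z) y‖ₑ ^ q
  have hW : Measurable (Function.uncurry W) :=
    ((measurable_fst.comp measurable_snd).pow_const _).inv.ennreal_ofReal.mul
      (((continuous_interpolationError hf Finset.univ b).comp
        (b.equivFunL.continuous.prodMap continuous_id)).enorm.measurable.pow_const q)
  calc dorronsoroEnergy q p μ f
      ≤ ∫⁻ x, (∫⁻ t in Ioi (0 : ℝ), ⨍⁻ z in p.closedBall 0 1, W z (t, x) ∂μ) ∂μ :=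
        lintegral_mono fun x => setLIntegral_mono' measurableSet_Ioi fun t ht =>
          affineDeviation_div_le_setLAverage b x ht
    _ = ∫⁻ y, (⨍⁻ z in p.closedBall 0 1, W z y ∂μ) ∂((volume.restrict (Ioi (0 : ℝ))).prod μ) :=
        (lintegral_prod_symm (fun y => ⨍⁻ z in p.closedBall 0 1, W z y ∂μ)
          hW.lintegral_prod_left'.aemeasurable).symm
    _ = ⨍⁻ z in p.closedBall 0 1,
          scaleEnergy q μ (interpolationError f Finset.univ b (b.equivFun z)) ∂μ :=
        lintegral_lintegral_swap (f := fun y z => W z y) (hW.comp measurable_swap).aemeasurable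

theorem IsConvexPotential.dorronsoroEnergy_le [CompleteSpace Y] {R C : ℝ} {G : Y → ℝ}
    (hG : IsConvexPotential q R C G) (hq : 1 ≤ q) (hR : Module.finrank ℝ E ≤ R)
    (hp : ∀ x, p x = 0 → x = 0) (hfs : HasCompactSupport f) (hf : ∀ x y, ‖f x - f y‖ ≤ p (x - y)) :
    dorronsoroEnergy q p μ f ≤
      (2 ^ (3 * q + 2)) ^ Module.finrank ℝ E * (2 ^ (q + 2) * ENNReal.ofReal C) *
        μ (tsupport f) := by
  have hfc := continuous_of_seminorm_lipschitz p hf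
  obtain ⟨b, hb, hcoord⟩ := exists_auerbach_basis hp (Module.finBasis ℝ E)
  have hsum : ∑ i, p (b i) ≤ R := by
    refine (Finset.sum_le_card_nsmul _ _ 1 fun i _ => hb i).trans ?_
    simpa using hR
  have hball : μ (p.closedBall 0 1) ≠ ∞ := (isCompact_seminorm_closedBall hp 0 1).measure_lt_top.ne
  calc dorronsoroEnergy q p μ f
      ≤ ⨍⁻ z in p.closedBall 0 1,
          scaleEnergy q μ (interpolationError f Finset.univ b (b.equivFun z)) ∂μ :=
        dorronsoroEnergy_le_setLAverage hfc b
    _ ≤ ⨍⁻ z in p.closedBall 0 1, (2 ^ (3 * q + 2)) ^ Module.finrank ℝ E *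
          (2 ^ (q + 2) * ENNReal.ofReal C * μ (tsupport f)) ∂μ := by
        rw [setLAverage_eq, setLAverage_eq]
        gcongr ?_ / _
        refine setLIntegral_mono' (isClosed_seminorm_closedBall p 0 1).measurableSet fun z hz => ?_
        have := scaleEnergy_interpolationError_le hq hfc
          (fun u v => hG.scaleEnergy_mixedDiff_le (μ := μ) hfc hfs hf) (σ := b.equivFun z)
          (fun i => (hcoord z i).trans (by simpa using hz)) Finset.univ hsum
        simpa using this
    _ = _ := by
        rw [setLAverage_const (measure_seminorm_closedBall_pos p μ 0 one_pos).ne' hball]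
        ring

end DorronsoroEstimate

theorem exists_dorronsoroIneq {Y : Type*} [NormedAddCommGroup Y] [NormedSpace ℝ Y]
    [CompleteSpace Y] (hY : AdmitsEquivUniformlyConvexNorm Y) :
    ∃ q : ℝ, 2 ≤ q ∧ ∀ n : ℕ, 0 < n → ∃ C : ℝ, 0 < C ∧
      ∀ N : EuclideanSpace ℝ (Fin n) → ℝ, IsNorm N → DorronsoroIneq q C N Y := by
  obtain ⟨q, hq, hG⟩ := exists_isConvexPotential hY
  refine ⟨q, by exact_mod_cast hq, fun n hn => ?_⟩
  obtain ⟨C, G, hG⟩ := hG n (by exact_mod_cast hn)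
  set K : ℝ≥0∞ := (2 ^ (3 * q + 2)) ^ n * (2 ^ (q + 2) * ENNReal.ofReal C)
  have hK : K ≠ ∞ := by finiteness
  refine ⟨K.toReal + 1, by positivity, fun N hN => ?_⟩
  obtain ⟨p, rfl⟩ := hN.exists_seminorm
  refine dorronsoroIneq_iff.2 fun f hfs hf => ?_
  refine (hG.dorronsoroEnergy_le (by lia) (by simp) hN.1 hfs hf).trans ?_
  rw [finrank_euclideanSpace_fin]
  gcongr
  exact (ENNReal.ofReal_toReal hK).symm.le.trans (ofReal_le_ofReal (by linarith))

lemma DorronsoroIneq.mono {Y : Type*} [NormedAddCommGroup Y] [NormedSpace ℝ Y] {n : ℕ}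
    {q C C' : ℝ} {N : EuclideanSpace ℝ (Fin n) → ℝ} (h : DorronsoroIneq q C N Y) (hC : C ≤ C') :
    DorronsoroIneq q C' N Y :=
  fun f hfs hf => (h f hfs hf).trans (by gcongr)

/-- **Theorem (characterization of superreflexivity by a Dorronsoro estimate).** -/
theorem statement5 (Y : Type*) [NormedAddCommGroup Y] [NormedSpace ℝ Y] [CompleteSpace Y] :
    (AdmitsEquivUniformlyConvexNorm Y ↔
      (∃ q : ℝ, 2 ≤ q ∧ ∀ n : ℕ, 0 < n → ∃ C : ℝ, 0 < C ∧
        ∀ N : EuclideanSpace ℝ (Fin n) → ℝ, IsNorm N → DorronsoroIneq q C N Y)) ∧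
    ((∃ q : ℝ, 2 ≤ q ∧ ∀ n : ℕ, 0 < n → ∃ C : ℝ, 0 < C ∧
        ∀ N : EuclideanSpace ℝ (Fin n) → ℝ, IsNorm N → DorronsoroIneq q C N Y) ↔
      (∃ q C : ℝ, 2 ≤ q ∧ 2 ≤ C ∧ ∃ n₀ : ℕ, 0 < n₀ ∧
        ∃ N₀ : EuclideanSpace ℝ (Fin n₀) → ℝ, IsNorm N₀ ∧ DorronsoroIneq q C N₀ Y)) := by
  have h₂₃ : (∃ q : ℝ, 2 ≤ q ∧ ∀ n : ℕ, 0 < n → ∃ C : ℝ, 0 < C ∧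
      ∀ N : EuclideanSpace ℝ (Fin n) → ℝ, IsNorm N → DorronsoroIneq q C N Y) →
      ∃ q C : ℝ, 2 ≤ q ∧ 2 ≤ C ∧ ∃ n₀ : ℕ, 0 < n₀ ∧
        ∃ N₀ : EuclideanSpace ℝ (Fin n₀) → ℝ, IsNorm N₀ ∧ DorronsoroIneq q C N₀ Y := by
    rintro ⟨q, hq, h⟩
    obtain ⟨C, -, hC⟩ := h 1 one_pos
    exact ⟨q, max C 2, hq, le_max_right C 2, 1, one_pos, norm, isNorm_norm _,
      (hC norm (isNorm_norm _)).mono (le_max_left C 2)⟩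
  have h₃₁ : (∃ q C : ℝ, 2 ≤ q ∧ 2 ≤ C ∧ ∃ n₀ : ℕ, 0 < n₀ ∧
      ∃ N₀ : EuclideanSpace ℝ (Fin n₀) → ℝ, IsNorm N₀ ∧ DorronsoroIneq q C N₀ Y) →
      AdmitsEquivUniformlyConvexNorm Y := by
    rintro ⟨q, C, hq, -, n, hn, N, hN, h⟩
    exact h.admitsEquivUniformlyConvexNorm hn hN (by linarith)
  exact ⟨⟨exists_dorronsoroIneq, h₃₁ ∘ h₂₃⟩, ⟨h₂₃, exists_dorronsoroIneq ∘ h₃₁⟩⟩
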